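/- arXiv:1309.5658 — 2 statements merged into one kernel-verified Lean document; each statement's English description precedes it below -/
import Mathlib

section
/- Let f ∈ L¹([0,1], r dr) be nonnegative with ∫₀¹ f(r) r dr > 0. There exists λ_c > 0 such that for every 0 < λ < λ_c the radial Dirichlet problem has at least two distinct weak solutions. Precisely, there exist functions u₁ ≠ u₂ on (0,1], each continuously differentiable on (0,1] with locally absolutely continuous first derivative, satisfying: ∫₀¹ [(uᵢ'')² + (uᵢ')²/r²] r dr < ∞; uᵢ(1) = 0, uᵢ'(1) = 0, and lim_{r→0⁺} uᵢ'(r) = 0; and for every smooth φ with compact support in (0,1), ∫₀¹ [uᵢ''φ'' + uᵢ'φ'/r²] r dr + (1/2)∫₀¹ (uᵢ')²φ' dr = λ∫₀¹ f φ r dr. Moreover u₁ is a local minimizer with J_λ(u₁) < 0 and u₂ is a mountain-pass critical point with J_λ(u₂) > 0. -/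
/-!
Set `w = u'`. Completing the square with the exact derivative `(w v)'` shows that the energy inner
product `∫₀¹ (w' v' + w v / r²) r dr` equals the `L²(0,1)` inner product of `√r (w' - w/r)` and
`√r (v' - v/r)`. The map `toL2 : w ↦ √r (w' - w/r)` is therefore an isometry of the radial Dirichlet
class onto `L²(0,1)`, with explicit inverse `ofL2 : g ↦ -r ∫_r^1 s^(-3/2) g(s) ds`, and the bound
`|ofL2 g r| ≤ ‖g‖` follows from Cauchy-Schwarz. In this picture
`J_λ = ½‖g‖² + ⅙ B(g,g,g) - ℓ(g)` with `B(p,q,s) = ∫₀¹ w_p w_q w_s dr`, a symmetric trilinear form of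
norm at most one which is weakly sequentially continuous by dominated convergence, and with `ℓ`
a nonzero bounded functional of norm at most `λ ∫₀¹ f r dr`.

If `‖ℓ‖ < 1/6`, such a functional has two critical points (`exists_two_critical`). The energy is
larger than its value at `0` on the sphere of radius `1/2`, so a minimizer `g` over the closed ball,
obtained by weak compactness, lies in the interior; its energy is negative and larger than `-1/12`
(`exists_local_min`). Shifting by `g` removes the linear term: `g + z` is critical when `z` is
critical for `½Q(z) + ⅙B(z,z,z)` with `Q(z) = ‖z‖² + B(g,z,z) ≥ ½‖z‖²`. Both terms are homogeneous,
so a nonzero `z` is obtained by rescaling a maximizer of `B(p,p,p)` over `Q(p) ≤ 1`, which exists by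
weak compactness again (`exists_shifted_solution`). Its energy
relative to `g` is `Q(z)/6 ≥ 1/12`, so the second critical point has positive energy.
-/

open MeasureTheory Set Filter

/-- The energy functional `J_λ` of the radial Dirichlet problem. -/
noncomputable def Jfun (lam : ℝ) (f u : ℝ → ℝ) : ℝ :=
  (1 / 2) * (∫ r in (0:ℝ)..1, ((deriv (deriv u) r) ^ 2 + (deriv u r) ^ 2 / r ^ 2) * r)
    + (1 / 6) * (∫ r in (0:ℝ)..1, (deriv u r) ^ 3)
    - lam * ∫ r in (0:ℝ)..1, f r * u r * r

/-- Membership in the radial `W^{2,2}([0,1], r dr)` Dirichlet class: `u` is `C¹` on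
`(0,1]` with locally absolutely continuous first derivative, has finite energy
`∫₀¹ [(u'')² + (u')²/r²] r dr < ∞`, and satisfies `u(1) = 0`, `u'(1) = 0` and
`u'(r) → 0` as `r → 0⁺`. -/
def DirichletAdmissible (u : ℝ → ℝ) : Prop :=
  (∀ r ∈ Ioc (0:ℝ) 1, DifferentiableAt ℝ u r) ∧
  ContinuousOn (deriv u) (Ioc 0 1) ∧
  (∀ a ∈ Ioc (0:ℝ) 1, ∀ b ∈ Ioc (0:ℝ) 1,
    deriv u b - deriv u a = ∫ r in a..b, deriv (deriv u) r) ∧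
  IntervalIntegrable
    (fun r => ((deriv (deriv u) r) ^ 2 + (deriv u r) ^ 2 / r ^ 2) * r) volume 0 1 ∧
  u 1 = 0 ∧ deriv u 1 = 0 ∧
  Tendsto (deriv u) (nhdsWithin 0 (Ioi 0)) (nhds 0)

/-- Weak solution of the radial Dirichlet problem
`(1/r)( r ( (1/r)( r u' )' )' )' = (1/r) u' u'' + λ f` on `(0,1)`. -/
def DirichletWeakSol (lam : ℝ) (f u : ℝ → ℝ) : Prop :=
  DirichletAdmissible u ∧
  ∀ φ : ℝ → ℝ, ContDiff ℝ (⊤ : ℕ∞) φ → HasCompactSupport φ → tsupport φ ⊆ Ioo 0 1 →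
    (∫ r in (0:ℝ)..1,
        (deriv (deriv u) r * deriv (deriv φ) r + deriv u r * deriv φ r / r ^ 2) * r)
      + (1 / 2) * (∫ r in (0:ℝ)..1, (deriv u r) ^ 2 * deriv φ r)
      = lam * ∫ r in (0:ℝ)..1, f r * φ r * r

/-! ### Critical points of cubic functionals on a Hilbert space -/

section Abstract

open Topology

variable {H : Type*} [NormedAddCommGroup H] [InnerProductSpace ℝ H]

/-- Weak convergence of a sequence in a real Hilbert space. Boundedness of the sequence, automatic
by the uniform boundedness principle, is made part of the definition. -/
def WeakTo (a : ℕ → H) (b : H) : Prop :=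
  (∃ R : ℝ, ∀ n, ‖a n‖ ≤ R) ∧ ∀ ψ : H, Tendsto (fun n => inner ℝ (a n) ψ) atTop (𝓝 (inner ℝ b ψ))

/-- Symmetric trilinear forms of norm at most one that are sequentially continuous for the weak
topology in all three arguments together. -/
structure IsCompactTrilinear (B : H → H → H → ℝ) : Prop where
  add_left : ∀ a b c d, B (a + b) c d = B a c d + B b c d
  smul_left : ∀ (t : ℝ) a c d, B (t • a) c d = t * B a c d
  comm_left : ∀ a b c, B a b c = B b a c
  comm_right : ∀ a b c, B a b c = B a c b
  bound : ∀ a b c, |B a b c| ≤ ‖a‖ * ‖b‖ * ‖c‖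
  tendsto : ∀ (a b c : ℕ → H) (a' b' c' : H), WeakTo a a' → WeakTo b b' → WeakTo c c' →
    Tendsto (fun n => B (a n) (b n) (c n)) atTop (𝓝 (B a' b' c'))

/-- The abstract energy `½‖g‖² + ⅙ B(g,g,g) - ℓ(g)`. -/
noncomputable def absJ (B : H → H → H → ℝ) (l : H →L[ℝ] ℝ) (g : H) : ℝ :=
  ‖g‖ ^ 2 / 2 + B g g g / 6 - l g

lemma exists_weakTo_subseq [CompleteSpace H] [TopologicalSpace.SeparableSpace H]
    (a : ℕ → H) (R : ℝ) (ha : ∀ n, ‖a n‖ ≤ R) :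
    ∃ (b : H) (φ : ℕ → ℕ), StrictMono φ ∧ WeakTo (a ∘ φ) b := by
  have hc := WeakDual.isSeqCompact_closedBall ℝ H (0 : StrongDual ℝ H) R
  obtain ⟨x, -, φ, hφ, hx⟩ := hc (x := fun n => StrongDual.toWeakDual
      (InnerProductSpace.toDual ℝ H (a n))) (by
    intro n
    simp only [mem_preimage, Metric.mem_closedBall, dist_zero_right]
    show ‖InnerProductSpace.toDual ℝ H (a n)‖ ≤ R
    rw [LinearIsometryEquiv.norm_map]
    exact ha n)
  refine ⟨(InnerProductSpace.toDual ℝ H).symm (WeakDual.toStrongDual x), φ, hφ, ⟨R, fun n => ha _⟩, fun ψ => ?_⟩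
  have h := ((WeakDual.eval_continuous (𝕜 := ℝ) ψ).tendsto x).comp hx
  rw [InnerProductSpace.toDual_symm_apply]
  exact h

lemma WeakTo.clm [CompleteSpace H] {a : ℕ → H} {b : H} (h : WeakTo a b) (l : H →L[ℝ] ℝ) :
    Tendsto (fun n => l (a n)) atTop (𝓝 (l b)) := by
  have := h.2 ((InnerProductSpace.toDual ℝ H).symm l)
  simpa only [real_inner_comm ((InnerProductSpace.toDual ℝ H).symm l),
    InnerProductSpace.toDual_symm_apply] using this

lemma WeakTo.norm_sq_le {a : ℕ → H} {b : H} (h : WeakTo a b) {s : ℕ → ℝ} {s' : ℝ}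
    (hs : ∀ n, ‖a n‖ ^ 2 ≤ s n) (hs' : Tendsto s atTop (𝓝 s')) : ‖b‖ ^ 2 ≤ s' := by
  have h1 : Tendsto (fun n => (s n + ‖b‖ ^ 2) / 2 - inner ℝ (a n) b) atTop
      (𝓝 ((s' + ‖b‖ ^ 2) / 2 - inner ℝ b b)) := ((hs'.add_const _).div_const _).sub (h.2 b)
  have h2 := ge_of_tendsto' h1 (b := 0) (fun n => by
    have := norm_sub_sq_real (a n) b
    nlinarith [hs n, sq_nonneg ‖a n - b‖])
  rw [real_inner_self_eq_norm_sq] at h2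
  linarith

lemma WeakTo.const (b : H) : WeakTo (fun _ => b) b :=
  ⟨⟨_, fun _ => le_rfl⟩, fun _ => tendsto_const_nhds⟩

lemma norm_sq_add_smul (a b : H) (t : ℝ) :
    ‖a + t • b‖ ^ 2 = ‖a‖ ^ 2 + 2 * t * inner ℝ a b + t ^ 2 * ‖b‖ ^ 2 := by
  rw [norm_add_sq_real, inner_smul_right, norm_smul, mul_pow, Real.norm_eq_abs, sq_abs]
  ring

namespace IsCompactTrilinear

variable {B : H → H → H → ℝ}

lemma smul_mid (hB : IsCompactTrilinear B) (t : ℝ) (a b c : H) : B a (t • b) c = t * B a b c := by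
  rw [hB.comm_left, hB.smul_left, hB.comm_left]

lemma smul_right (hB : IsCompactTrilinear B) (t : ℝ) (a b c : H) : B a b (t • c) = t * B a b c := by
  rw [hB.comm_right, hB.smul_mid, hB.comm_right]

lemma add_mid (hB : IsCompactTrilinear B) (a b c d : H) : B a (b + c) d = B a b d + B a c d := by
  rw [hB.comm_left, hB.add_left, hB.comm_left, hB.comm_left c]

lemma add_right (hB : IsCompactTrilinear B) (a b c d : H) : B a b (c + d) = B a b c + B a b d := by
  rw [hB.comm_right, hB.add_mid, hB.comm_right, hB.comm_right _ d]

lemma expand (hB : IsCompactTrilinear B) (a b : H) (t : ℝ) :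
    B (a + t • b) (a + t • b) (a + t • b) =
    B a a a + 3 * t * B a a b + 3 * t ^ 2 * B a b b + t ^ 3 * B b b b := by
  simp only [hB.add_left, hB.add_mid, hB.add_right, hB.smul_left, hB.smul_mid, hB.smul_right]
  rw [hB.comm_right a b a, hB.comm_left b a a, hB.comm_right a b a, hB.comm_left b a b,
    hB.comm_right b b a, hB.comm_left b a b]
  ring

lemma expand₂ (hB : IsCompactTrilinear B) (v a b : H) (t : ℝ) :
    B v (a + t • b) (a + t • b) =
    B v a a + 2 * t * B v a b + t ^ 2 * B v b b := by
  simp only [hB.add_mid, hB.add_right, hB.smul_mid, hB.smul_right]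
  rw [hB.comm_right v b a]
  ring

end IsCompactTrilinear

lemma hasDerivAt_cubic (a b c d : ℝ) :
    HasDerivAt (fun t : ℝ => a + t * b + t ^ 2 * c + t ^ 3 * d) b 0 := by
  have h := (((hasDerivAt_const (0:ℝ) a).add ((hasDerivAt_id (0:ℝ)).mul_const b)).add
    (((hasDerivAt_id (0:ℝ)).pow 2).mul_const c)).add (((hasDerivAt_id (0:ℝ)).pow 3).mul_const d)
  refine (h.congr_deriv (by simp)).congr_of_eventuallyEq (Eventually.of_forall fun t => ?_)
  simp

lemma absJ_expand {B : H → H → H → ℝ} (hB : IsCompactTrilinear B) (l : H →L[ℝ] ℝ)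
    (g ψ : H) (t : ℝ) : absJ B l (g + t • ψ) = absJ B l g
      + t * (inner ℝ g ψ + B g g ψ / 2 - l ψ)
      + t ^ 2 * (‖ψ‖ ^ 2 / 2 + B g ψ ψ / 2) + t ^ 3 * (B ψ ψ ψ / 6) := by
  simp only [absJ, norm_sq_add_smul, hB.expand, map_add, map_smul, smul_eq_mul]
  ring

/-- The local minimizer: the energy is positive on the sphere of radius `1/2`, so a minimizer over
the closed ball, which exists by weak compactness, is an interior critical point. -/
lemma exists_local_min [CompleteSpace H] [TopologicalSpace.SeparableSpace H]
    {B : H → H → H → ℝ} (hB : IsCompactTrilinear B) (l : H →L[ℝ] ℝ) (hl : ‖l‖ < 1 / 6)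
    (hl0 : l ≠ 0) : ∃ g : H, ‖g‖ < 1 / 2 ∧ absJ B l g < 0 ∧ -1 / 12 < absJ B l g ∧
      (∀ ψ, inner ℝ g ψ + B g g ψ / 2 = l ψ) ∧
      ∀ p, ‖p‖ ≤ 1 / 2 → absJ B l g ≤ absJ B l p := by
  have hbd : ∀ p : H, ‖p‖ ≤ 1 / 2 → -1 / 12 + ‖p‖ ^ 2 * (5 / 12) < absJ B l p := by
    intro p hp
    have h1 := (abs_le.1 (hB.bound p p p)).1
    have h2 : l p ≤ ‖l‖ * ‖p‖ := (le_abs_self _).trans (l.le_opNorm p)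
    have h3 : ‖l‖ * ‖p‖ ≤ ‖l‖ * (1 / 2) := by gcongr
    have h4 : ‖p‖ * ‖p‖ * ‖p‖ ≤ ‖p‖ * ‖p‖ * (1 / 2) := by gcongr
    unfold absJ
    nlinarith
  -- a minimizing sequence and its weak limit
  set S := absJ B l '' Metric.closedBall (0 : H) (1 / 2) with hS
  have hne : S.Nonempty := ⟨_, 0, by simp, rfl⟩
  have hbb : BddBelow S := by
    refine ⟨-1 / 12, ?_⟩
    rintro _ ⟨p, hp, rfl⟩
    have := hbd p (by simpa using hp)
    nlinarith [sq_nonneg ‖p‖]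
  obtain ⟨y, -, hy, hyS⟩ := exists_seq_tendsto_sInf hne hbb
  choose a ha hay using hyS
  have ha' : ∀ n, ‖a n‖ ≤ 1 / 2 := fun n => by simpa using ha n
  obtain ⟨g, φ, hφ, hg⟩ := exists_weakTo_subseq a (1 / 2) ha'
  have hgn : ‖g‖ ≤ 1 / 2 := by
    have := hg.norm_sq_le (s := fun _ => (1 / 2) ^ 2)
      (fun n => by have := ha' (φ n); simp only [Function.comp]; gcongr) tendsto_const_nhds
    exact (sq_le_sq₀ (norm_nonneg _) (by norm_num)).1 this
  have hmin : ∀ p, ‖p‖ ≤ 1 / 2 → absJ B l g ≤ absJ B l p := by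
    intro p hp
    have hlim : Tendsto (fun n => 2 * (y (φ n) - B (a (φ n)) (a (φ n)) (a (φ n)) / 6
        + l (a (φ n)))) atTop (𝓝 (2 * (sInf S - B g g g / 6 + l g))) :=
      (((hy.comp hφ.tendsto_atTop).sub ((hB.tendsto _ _ _ _ _ _ hg hg hg).div_const 6)).add
        (hg.clm l)).const_mul 2
    have h1 := hg.norm_sq_le (fun n => by
      have := hay (φ n)
      simp only [absJ] at this
      simp only [Function.comp]
      linarith) hlim
    have h2 : sInf S ≤ absJ B l p := csInf_le hbb ⟨p, by simpa using hp, rfl⟩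
    have h3 : absJ B l g = ‖g‖ ^ 2 / 2 + B g g g / 6 - l g := rfl
    linarith
  have hneg : absJ B l g < 0 := by
    obtain ⟨ψ, hψ⟩ : ∃ ψ, 0 < l ψ := by
      obtain ⟨ψ, hψ⟩ : ∃ ψ, l ψ ≠ 0 := by
        by_contra! h
        exact hl0 (ContinuousLinearMap.ext h)
      rcases lt_or_gt_of_ne hψ with h | h
      · exact ⟨-ψ, by simpa using h⟩
      · exact ⟨ψ, h⟩
    have hc : Tendsto (fun t : ℝ => t * (‖ψ‖ ^ 2 / 2) + t ^ 2 * (B ψ ψ ψ / 6)) (𝓝[>] 0)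
        (𝓝 0) := by
      have : Continuous (fun t : ℝ => t * (‖ψ‖ ^ 2 / 2) + t ^ 2 * (B ψ ψ ψ / 6)) := by fun_prop
      simpa using (this.tendsto 0).mono_left nhdsWithin_le_nhds
    have hn : Tendsto (fun t : ℝ => ‖t • ψ‖) (𝓝[>] 0) (𝓝 0) := by
      have : Continuous (fun t : ℝ => ‖t • ψ‖) := by fun_prop
      simpa using (this.tendsto 0).mono_left nhdsWithin_le_nhds
    obtain ⟨t, ht1, ht2, ht0⟩ := ((hc.eventually (gt_mem_nhds hψ)).and
      ((hn.eventually (gt_mem_nhds (show (0:ℝ) < 1 / 2 by norm_num))).and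
        self_mem_nhdsWithin)).exists
    refine (hmin (t • ψ) ht2.le).trans_lt ?_
    have ht0' : 0 < t := ht0
    simp only [absJ, hB.smul_left, hB.smul_mid, hB.smul_right, norm_smul, mul_pow, map_smul,
      smul_eq_mul, Real.norm_eq_abs, sq_abs]
    nlinarith [mul_pos ht0' (sub_pos.2 ht1)]
  have hgn' : ‖g‖ < 1 / 2 := by
    refine lt_of_le_of_ne hgn fun h => ?_
    have := hbd g hgn
    rw [h] at this
    norm_num at this
    linarith
  refine ⟨g, hgn', hneg, ?_, fun ψ => ?_, hmin⟩
  · have := hbd g hgn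
    nlinarith [sq_nonneg ‖g‖]
  · have hloc : IsLocalMin (fun t : ℝ => absJ B l (g + t • ψ)) 0 := by
      have hcont : Continuous (fun t : ℝ => ‖g + t • ψ‖) := by fun_prop
      have := (hcont.tendsto 0).eventually_lt_const (u := (1 : ℝ) / 2) (by simpa using hgn')
      filter_upwards [this] with t ht
      simpa using hmin _ ht.le
    simp only [absJ_expand hB] at hloc
    have := hloc.hasDerivAt_eq_zero (hasDerivAt_cubic _ _ _ _)
    linarith

/-- A nonzero solution of the equation shifted by `v`: maximize `B(p,p,p)` over the set where the
quadratic form `Q(p) = ‖p‖² + B(v,p,p)` is at most one. Since `B(p,p,p)² ≤ M² Q(p)³` with equality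
at a maximizer, the Lagrange multiplier rule reduces to differentiating this polynomial inequality
along lines, and the multiplier is then removed by scaling. -/
lemma exists_shifted_solution [CompleteSpace H] [TopologicalSpace.SeparableSpace H]
    {B : H → H → H → ℝ} (hB : IsCompactTrilinear B) (hB0 : ∃ p, B p p p ≠ 0)
    (v : H) (hv : ‖v‖ ≤ 1 / 2) :
    ∃ z : H, z ≠ 0 ∧ ∀ ψ, inner ℝ z ψ + B v z ψ + B z z ψ / 2 = 0 := by
  set Q : H → ℝ := fun p => ‖p‖ ^ 2 + B v p p with hQ
  have hQl : ∀ p, ‖p‖ ^ 2 / 2 ≤ Q p := by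
    intro p
    have h1 := (abs_le.1 (hB.bound v p p)).1
    have h2 : ‖v‖ * (‖p‖ * ‖p‖) ≤ (1 / 2) * (‖p‖ * ‖p‖) := by gcongr
    simp only [hQ]
    nlinarith
  have hQs : ∀ (t : ℝ) p, Q (t • p) = t ^ 2 * Q p := by
    intro t p
    simp only [hQ, hB.smul_mid, hB.smul_right, norm_smul, mul_pow, Real.norm_eq_abs, sq_abs]
    ring
  have hCs : ∀ (t : ℝ) p, B (t • p) (t • p) (t • p) = t ^ 3 * B p p p := by
    intro t p
    simp only [hB.smul_left, hB.smul_mid, hB.smul_right]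
    ring
  have hn2 : ∀ p, Q p ≤ 1 → ‖p‖ ≤ 2 := by
    intro p hp
    have := hQl p
    by_contra! h
    nlinarith
  have hQpos : ∀ p, p ≠ 0 → 0 < Q p := by
    intro p hp
    have := hQl p
    have := norm_pos_iff.2 hp
    have : 0 < ‖p‖ ^ 2 := by positivity
    linarith
  set S := (fun p => B p p p) '' {p | Q p ≤ 1} with hS
  have hne : S.Nonempty := ⟨_, 0, by simpa [hQ] using (hQs 0 0).le.trans (by simp), rfl⟩
  have hbb : BddAbove S := by
    refine ⟨8, ?_⟩
    rintro _ ⟨p, hp, rfl⟩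
    refine (abs_le.1 (hB.bound p p p)).2.trans ?_
    have := hn2 p hp
    calc ‖p‖ * ‖p‖ * ‖p‖ ≤ 2 * 2 * 2 := by gcongr
      _ = 8 := by norm_num
  set M := sSup S with hM
  have hle : ∀ p, (B p p p) ^ 2 ≤ M ^ 2 * Q p ^ 3 := by
    intro p
    rcases eq_or_ne p 0 with rfl | hp
    · have h1 : B (0:H) 0 0 = 0 := by simpa using hCs 0 0
      have h2 : Q (0:H) = 0 := by simpa using hQs 0 0
      simp [h1, h2]
    have hq := hQpos p hp
    set s := (Real.sqrt (Q p))⁻¹ with hs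
    have hs2 : s ^ 2 * Q p = 1 := by
      rw [hs, inv_pow, Real.sq_sqrt hq.le, inv_mul_cancel₀ hq.ne']
    have h1 : s ^ 3 * B p p p ≤ M := le_csSup hbb ⟨s • p, by
      simp only [mem_ofPred_eq, hQs, hs2, le_refl], hCs _ _⟩
    have h2 : (-s) ^ 3 * B p p p ≤ M := le_csSup hbb ⟨(-s) • p, by
      simp only [mem_ofPred_eq, hQs, neg_sq, hs2, le_refl], hCs _ _⟩
    have h3 : |s ^ 3 * B p p p| ≤ M := abs_le.2 ⟨by linarith [neg_pow s 3], h1⟩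
    have h4 : (s ^ 3 * B p p p) ^ 2 ≤ M ^ 2 := sq_le_sq' (abs_le.1 h3).1 (abs_le.1 h3).2
    calc (B p p p) ^ 2 = (s ^ 2 * Q p) ^ 3 * (B p p p) ^ 2 := by rw [hs2]; ring
      _ = (s ^ 3 * B p p p) ^ 2 * Q p ^ 3 := by ring
      _ ≤ M ^ 2 * Q p ^ 3 := by gcongr
  have hM0 : M ≠ 0 := by
    obtain ⟨p, hp⟩ := hB0
    intro h
    have := hle p
    rw [h] at this
    have : 0 < (B p p p) ^ 2 := by positivity
    linarith
  obtain ⟨y, -, hy, hyS⟩ := exists_seq_tendsto_sSup hne hbb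
  choose a ha hay using hyS
  obtain ⟨g, φ, hφ, hg⟩ := exists_weakTo_subseq a 2 (fun n => hn2 _ (ha n))
  have hgQ : Q g ≤ 1 := by
    have hlim : Tendsto (fun n => 1 - B v (a (φ n)) (a (φ n))) atTop (𝓝 (1 - B v g g)) :=
      (hB.tendsto _ _ _ _ _ _ (WeakTo.const v) hg hg).const_sub 1
    have := hg.norm_sq_le (fun n => by
      have : Q (a (φ n)) ≤ 1 := ha (φ n)
      simp only [hQ] at this
      simp only [Function.comp]
      linarith) hlim
    simp only [hQ]
    linarith
  have hgM : B g g g = M := by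
    refine tendsto_nhds_unique (hB.tendsto _ _ _ _ _ _ hg hg hg) ?_
    have : (fun n => B ((a ∘ φ) n) ((a ∘ φ) n) ((a ∘ φ) n)) = y ∘ φ := by
      funext n
      exact hay (φ n)
    rw [this]
    exact hy.comp hφ.tendsto_atTop
  have hMsq : 0 < M ^ 2 := by positivity
  have hgQ1 : Q g = 1 := by
    have h1 := hle g
    rw [hgM] at h1
    have h2 : 1 ≤ Q g ^ 3 := by
      by_contra! h
      nlinarith
    refine le_antisymm hgQ ?_
    by_contra! h
    have h0 : 0 ≤ Q g := le_trans (by positivity) (hQl g)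
    exact absurd (pow_lt_one₀ h0 h three_ne_zero) (not_lt.2 h2)
  have hEL : ∀ ψ, M * (inner ℝ g ψ + B v g ψ) = B g g ψ := by
    intro ψ
    have hQe : ∀ t : ℝ, Q (g + t • ψ) =
        Q g + t * (2 * (inner ℝ g ψ + B v g ψ)) + t ^ 2 * Q ψ + t ^ 3 * 0 := by
      intro t
      simp only [hQ, hB.expand₂, norm_sq_add_smul]
      ring
    have hCe : ∀ t : ℝ, B (g + t • ψ) (g + t • ψ) (g + t • ψ) =
        B g g g + t * (3 * B g g ψ) + t ^ 2 * (3 * B g ψ ψ) + t ^ 3 * B ψ ψ ψ := by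
      intro t
      rw [hB.expand]
      ring
    have hd := (((hasDerivAt_cubic (Q g) (2 * (inner ℝ g ψ + B v g ψ)) (Q ψ) 0).pow 3).const_mul
      (M ^ 2)).sub ((hasDerivAt_cubic (B g g g) (3 * B g g ψ) (3 * B g ψ ψ) (B ψ ψ ψ)).pow 2)
    have hmin : IsLocalMin (fun t : ℝ =>
        M ^ 2 * (Q g + t * (2 * (inner ℝ g ψ + B v g ψ)) + t ^ 2 * Q ψ + t ^ 3 * 0) ^ 3
        - (B g g g + t * (3 * B g g ψ) + t ^ 2 * (3 * B g ψ ψ) + t ^ 3 * B ψ ψ ψ) ^ 2) 0 := by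
      refine Eventually.of_forall fun t => ?_
      have := hle (g + t • ψ)
      rw [hQe, hCe] at this
      simp only [hgM, hgQ1] at this ⊢
      norm_num
      linarith
    have := hmin.hasDerivAt_eq_zero hd
    simp only [hgM, hgQ1] at this
    norm_num at this
    have h2 : M * (6 * (M * (inner ℝ g ψ + B v g ψ) - B g g ψ)) = 0 := by linarith
    have := (mul_eq_zero.1 h2).resolve_left hM0
    linarith
  refine ⟨(-2 / M) • g, ?_, fun ψ => ?_⟩
  · refine smul_ne_zero (div_ne_zero (by norm_num) hM0) ?_
    rintro rfl
    have : B (0:H) 0 0 = 0 := by simpa using hCs 0 0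
    exact hM0 (hgM ▸ this)
  · have := hEL ψ
    simp only [hB.smul_left, hB.smul_mid, inner_smul_left]
    rw [← this]
    simp
    field_simp
    ring

/-- Two critical points of the abstract energy. The second one is the first one shifted by a nonzero
`z` as in `exists_shifted_solution`; its energy exceeds that of the first one by `Q(z)/6`, and
`½‖z‖² ≤ Q(z) = -½ B(z,z,z) ≤ ½‖z‖³` forces `Q(z) ≥ ½`. -/
lemma exists_two_critical [CompleteSpace H] [TopologicalSpace.SeparableSpace H]
    {B : H → H → H → ℝ} (hB : IsCompactTrilinear B) (hB0 : ∃ p, B p p p ≠ 0)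
    (l : H →L[ℝ] ℝ) (hl : ‖l‖ < 1 / 6) (hl0 : l ≠ 0) :
    ∃ g₁ g₂ : H, (∀ ψ, inner ℝ g₁ ψ + B g₁ g₁ ψ / 2 = l ψ) ∧
      (∀ ψ, inner ℝ g₂ ψ + B g₂ g₂ ψ / 2 = l ψ) ∧ absJ B l g₁ < 0 ∧ 0 < absJ B l g₂ ∧
      ∃ ε > (0:ℝ), ∀ p, ‖p - g₁‖ ^ 2 < ε → absJ B l g₁ ≤ absJ B l p := by
  obtain ⟨g, hg, hneg, hlow, hEL, hmin⟩ := exists_local_min hB l hl hl0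
  obtain ⟨z, hz, hzEL⟩ := exists_shifted_solution hB hB0 g hg.le
  refine ⟨g, g + z, hEL, fun ψ => ?_, hneg, ?_, (1 / 2 - ‖g‖) ^ 2, by nlinarith, fun p hp => ?_⟩
  · have h1 := hEL ψ
    have h2 := hzEL ψ
    rw [inner_add_left, hB.add_left, hB.add_mid, hB.add_mid, hB.comm_left z g]
    linarith
  · have h1 := absJ_expand hB l g z 1
    simp only [one_smul, hEL z] at h1
    have h2 := hzEL z
    rw [real_inner_self_eq_norm_sq] at h2
    have h3 := abs_le.1 (hB.bound z z z)
    have h4 := (abs_le.1 (hB.bound g z z)).1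
    have h5 : ‖g‖ * (‖z‖ * ‖z‖) ≤ (1 / 2) * (‖z‖ * ‖z‖) := by gcongr
    have hzn := norm_pos_iff.2 hz
    have h6 : 1 ≤ ‖z‖ := by
      by_contra! h
      have : ‖z‖ * ‖z‖ * ‖z‖ < ‖z‖ * ‖z‖ * 1 := by gcongr
      nlinarith
    rw [h1]
    nlinarith
  · have h1 : ‖p - g‖ < 1 / 2 - ‖g‖ := lt_of_pow_lt_pow_left₀ 2 (by linarith) hp
    refine hmin p ?_
    calc ‖p‖ = ‖(p - g) + g‖ := by rw [sub_add_cancel]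
      _ ≤ ‖p - g‖ + ‖g‖ := norm_add_le _ _
      _ ≤ 1 / 2 := by linarith

end Abstract

/-! ### The isometry between the radial class and `L²(0,1)` -/

section Radial

open Topology intervalIntegral

/-- Lebesgue measure on `(0,1]`. -/
noncomputable abbrev μ01 : Measure ℝ := volume.restrict (Ioc (0:ℝ) 1)

/-- The radial Dirichlet class expressed through the derivative `w = u'`. -/
structure AdmDeriv (w : ℝ → ℝ) : Prop where
  ac : ∀ a ∈ Ioc (0:ℝ) 1, AbsolutelyContinuousOnInterval w a 1
  energy : IntegrableOn (fun r => ((deriv w r) ^ 2 + (w r) ^ 2 / r ^ 2) * r) (Ioc 0 1) volume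
  one : w 1 = 0
  zero : Tendsto w (𝓝[>] 0) (𝓝 0)

/-- The transform `w ↦ √r (w' - w/r)`, an isometry from the radial class with the energy norm
onto `L²(0,1)`. -/
noncomputable def toL2 (w : ℝ → ℝ) (r : ℝ) : ℝ := Real.sqrt r * (deriv w r - w r / r)

/-- The inverse of `toL2`: `g ↦ -r ∫_r^1 s^(-3/2) g(s) ds`. The indicator cuts `g` off outside
`(0,1]`, so that the value depends only on the class of `g` modulo `μ01`-null sets. -/
noncomputable def ofL2 (g : ℝ → ℝ) (r : ℝ) : ℝ :=
  r * ∫ s in (1:ℝ)..r, (Ioc (0:ℝ) 1).indicator g s / (s * Real.sqrt s)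

lemma AbsolutelyContinuousOnInterval.congr' {f g : ℝ → ℝ} {a b : ℝ}
    (hf : AbsolutelyContinuousOnInterval f a b) (h : EqOn f g (uIcc a b)) :
    AbsolutelyContinuousOnInterval g a b := by
  rw [absolutelyContinuousOnInterval_iff] at hf ⊢
  intro ε hε
  obtain ⟨δ, hδ, H⟩ := hf ε hε
  refine ⟨δ, hδ, fun E hE hd => ?_⟩
  rw [Finset.sum_congr rfl (g := fun i => dist (f (E.2 i).1) (f (E.2 i).2))]
  · exact H E hE hd
  · intro i hi
    rw [h (hE.1 i hi).1, h (hE.1 i hi).2]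

lemma absolutelyContinuousOnInterval_const (c a b : ℝ) :
    AbsolutelyContinuousOnInterval (fun _ : ℝ => c) a b :=
  (contDiffOn_const (c := c)).absolutelyContinuousOnInterval

lemma tendsto_integral_left {h : ℝ → ℝ} (hh : IntegrableOn h (Ioc 0 1) volume) :
    Tendsto (fun a => ∫ x in a..1, h x) (𝓝[>] 0) (𝓝 (∫ x in (0:ℝ)..1, h x)) := by
  have hi : IntervalIntegrable h volume 0 1 :=
    (intervalIntegrable_iff_integrableOn_Ioc_of_le zero_le_one).2 hh
  have hc := continuousOn_primitive_interval' hi.symm (a := 1) (by simp)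
  have h0 : Tendsto (fun a => ∫ x in (1:ℝ)..a, h x) (𝓝[>] 0) (𝓝 (∫ x in (1:ℝ)..0, h x)) := by
    refine (hc 0 (by simp)).mono_left ?_
    rw [uIcc_of_ge zero_le_one]
    exact nhdsWithin_le_of_mem (Icc_mem_nhdsGT zero_lt_one)
  have := h0.neg
  simpa only [← integral_symm] using this

lemma ae_Ioc_of_ae_Ioo {P : ℝ → Prop} (h : ∀ᵐ x, x ∈ Ioo (0:ℝ) 1 → P x) : ∀ᵐ x ∂μ01, P x := by
  rw [ae_restrict_iff' measurableSet_Ioc]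
  have h₂ : ∀ᵐ x : ℝ, x ≠ 1 := by simp [ae_iff, measure_singleton]
  filter_upwards [h, h₂] with x hx h1 hm
  exact hx ⟨hm.1, lt_of_le_of_ne hm.2 h1⟩

/-- A property that holds almost everywhere on each `[a,1]` holds almost everywhere on `(0,1]`. -/
lemma ae_Ioc_of_forall {P : ℝ → Prop} (h : ∀ a ∈ Ioc (0:ℝ) 1, ∀ᵐ x, x ∈ Icc a 1 → P x) :
    ∀ᵐ x ∂μ01, P x := by
  rw [ae_restrict_iff' measurableSet_Ioc]
  have : ∀ᵐ x, ∀ n : ℕ, x ∈ Icc (1 / ((n:ℝ) + 1)) 1 → P x := by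
    rw [ae_all_iff]
    intro n
    refine h _ ⟨by positivity, ?_⟩
    rw [div_le_one (by positivity)]
    linarith [n.cast_nonneg (α := ℝ)]
  filter_upwards [this] with x hx hm
  obtain ⟨n, hn⟩ := exists_nat_one_div_lt hm.1
  exact hx n ⟨hn.le, hm.2⟩

namespace AdmDeriv

variable {w v : ℝ → ℝ}

lemma continuousOn (hw : AdmDeriv w) : ContinuousOn w (Ioc 0 1) := by
  intro x hx
  have h := (hw.ac (x / 2) ⟨by linarith [hx.1], by linarith [hx.1, hx.2]⟩).continuousOn
  rw [uIcc_of_le (by linarith [hx.1, hx.2])] at h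
  refine (h x ⟨by linarith [hx.1], hx.2⟩).mono_of_mem_nhdsWithin ?_
  rw [mem_nhdsWithin]
  exact ⟨Ioi (x / 2), isOpen_Ioi, by simp only [mem_Ioi]; linarith [hx.1],
    fun y hy => ⟨le_of_lt hy.1, hy.2.2⟩⟩

lemma aesm (hw : AdmDeriv w) : AEStronglyMeasurable w μ01 :=
  hw.continuousOn.aestronglyMeasurable measurableSet_Ioc

lemma aesm_deriv (w : ℝ → ℝ) : AEStronglyMeasurable (deriv w) μ01 :=
  (measurable_deriv w).aestronglyMeasurable

lemma aesm_toL2 (hw : AdmDeriv w) : AEStronglyMeasurable (toL2 w) μ01 := by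
  have h1 := hw.aesm.aemeasurable
  have h2 := measurable_deriv w
  refine AEMeasurable.aestronglyMeasurable ?_
  unfold toL2
  fun_prop

lemma memLp (hw : AdmDeriv w) : MemLp (toL2 w) 2 μ01 := by
  rw [memLp_two_iff_integrable_sq hw.aesm_toL2]
  refine (hw.energy.const_mul 2).mono' (hw.aesm_toL2.pow 2) ?_
  filter_upwards [ae_restrict_mem measurableSet_Ioc] with r hr
  rw [Real.norm_eq_abs, abs_of_nonneg (sq_nonneg _), toL2, mul_pow, Real.sq_sqrt hr.1.le,
    ← div_pow]
  nlinarith [mul_nonneg hr.1.le (sq_nonneg (deriv w r + w r / r))]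

lemma integrable_cross (hw : AdmDeriv w) (hv : AdmDeriv v) :
    IntegrableOn (fun r => (deriv w r * deriv v r + w r * v r / r ^ 2) * r) (Ioc 0 1) volume := by
  have h1 := hw.aesm.aemeasurable
  have h2 := measurable_deriv w
  have h3 := hv.aesm.aemeasurable
  have h4 := measurable_deriv v
  refine (hw.energy.add hv.energy).mono' (AEMeasurable.aestronglyMeasurable (by fun_prop)) ?_
  filter_upwards [ae_restrict_mem measurableSet_Ioc] with r hr
  have hr0 := hr.1.le
  rw [Real.norm_eq_abs, abs_mul, abs_of_nonneg hr0, Pi.add_apply, ← add_mul]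
  refine mul_le_mul_of_nonneg_right ?_ hr0
  rw [show w r * v r / r ^ 2 = (w r / r) * (v r / r) by ring, ← div_pow, ← div_pow]
  rw [abs_le]
  constructor <;> nlinarith [sq_nonneg (deriv w r + deriv v r), sq_nonneg (w r / r + v r / r),
    sq_nonneg (deriv w r - deriv v r), sq_nonneg (w r / r - v r / r), sq_nonneg (deriv w r),
    sq_nonneg (deriv v r), sq_nonneg (w r / r), sq_nonneg (v r / r)]

end AdmDeriv

/-- Completing the square in the energy: the mixed terms form the exact derivative `(w v)'`. -/
lemma integral_toL2_mul {w v : ℝ → ℝ} {a : ℝ} (ha : a ∈ Ioc (0:ℝ) 1)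
    (hw : AbsolutelyContinuousOnInterval w a 1) (hv : AbsolutelyContinuousOnInterval v a 1)
    (hi : IntervalIntegrable (fun r => (deriv w r * deriv v r + w r * v r / r ^ 2) * r)
      volume a 1) :
    ∫ r in a..1, (deriv w r * deriv v r + w r * v r / r ^ 2) * r =
      (∫ r in a..1, toL2 w r * toL2 v r) + (w 1 * v 1 - w a * v a) := by
  have hint : IntervalIntegrable (fun r => deriv w r * v r + w r * deriv v r) volume a 1 :=
    (hw.intervalIntegrable_deriv.mul_continuousOn hv.continuousOn).add
      (hv.intervalIntegrable_deriv.continuousOn_mul hw.continuousOn)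
  rw [← hw.integral_deriv_mul_eq_sub hv, ← sub_eq_iff_eq_add, ← integral_sub hi hint]
  refine integral_congr fun r hr => ?_
  rw [uIcc_of_le ha.2] at hr
  have hr0 : 0 < r := ha.1.trans_le hr.1
  have hs := Real.mul_self_sqrt hr0.le
  simp only [toL2]
  calc _ = r * ((deriv w r - w r / r) * (deriv v r - v r / r)) := by field_simp; ring
    _ = (Real.sqrt r * Real.sqrt r) * ((deriv w r - w r / r) * (deriv v r - v r / r)) := by rw [hs]
    _ = _ := by ring

lemma AdmDeriv.energy_eq {w v : ℝ → ℝ} (hw : AdmDeriv w) (hv : AdmDeriv v) :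
    ∫ r in (0:ℝ)..1, (deriv w r * deriv v r + w r * v r / r ^ 2) * r =
      ∫ r in (0:ℝ)..1, toL2 w r * toL2 v r := by
  have hi := hw.integrable_cross hv
  have h1 := tendsto_integral_left hi
  have h2 := tendsto_integral_left (hw.memLp.integrable_mul hv.memLp)
  have h3 : Tendsto (fun a => w 1 * v 1 - w a * v a) (𝓝[>] 0) (𝓝 0) := by
    simpa [hw.one] using ((hw.zero.mul hv.zero).const_sub (w 1 * v 1))
  have h4 := h2.add h3
  rw [add_zero] at h4
  refine tendsto_nhds_unique h1 (h4.congr' ?_)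
  filter_upwards [Ioc_mem_nhdsGT (zero_lt_one (α := ℝ))] with a ha
  refine (integral_toL2_mul ha (hw.ac a ha) (hv.ac a ha) ?_).symm
  rw [intervalIntegrable_iff_integrableOn_Ioc_of_le ha.2]
  exact hi.mono_set (Ioc_subset_Ioc_left ha.1.le)

lemma absolutelyContinuousOnInterval_inv {a : ℝ} (ha : a ∈ Ioc (0:ℝ) 1) :
    AbsolutelyContinuousOnInterval (fun r : ℝ => r⁻¹) a 1 := by
  refine ContDiffOn.absolutelyContinuousOnInterval ?_
  refine contDiffOn_id.inv fun x hx => ?_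
  rw [uIcc_of_le ha.2] at hx
  exact (ha.1.trans_le hx.1).ne'

lemma AdmDeriv.ofL2_toL2 {w : ℝ → ℝ} (hw : AdmDeriv w) {r : ℝ} (hr : r ∈ Ioc (0:ℝ) 1) :
    ofL2 (toL2 w) r = w r := by
  have h1 := ((hw.ac r hr).fun_mul (absolutelyContinuousOnInterval_inv hr)).integral_deriv_eq_sub
  have h2 : ∫ s in r..1, (Ioc (0:ℝ) 1).indicator (toL2 w) s / (s * Real.sqrt s) =
      ∫ s in r..1, deriv (fun s => w s * s⁻¹) s := by
    refine integral_congr_ae ?_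
    filter_upwards [(hw.ac r hr).ae_differentiableAt] with s hs hm
    rw [uIoc_of_le hr.2] at hm
    rw [uIcc_of_le hr.2] at hs
    have hs0 : 0 < s := hr.1.trans hm.1
    have hd := (hs ⟨hm.1.le, hm.2⟩).hasDerivAt.fun_mul (hasDerivAt_inv hs0.ne')
    rw [hd.deriv, indicator_of_mem (show s ∈ Ioc (0:ℝ) 1 from ⟨hs0, hm.2⟩), toL2]
    have := (Real.sqrt_pos.2 hs0).ne'
    field_simp
    ring
  rw [ofL2, integral_symm, h2, h1, hw.one]
  have := hr.1.ne'
  field_simp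
  ring

section OfL2

variable {g g' : ℝ → ℝ}

lemma integrable_indicator_of_memLp (hg : MemLp g 2 μ01) :
    Integrable ((Ioc (0:ℝ) 1).indicator g) volume :=
  (integrable_indicator_iff measurableSet_Ioc).2 (hg.integrable (by norm_num))

lemma intervalIntegrable_kernel (hg : MemLp g 2 μ01) {a b : ℝ} (ha : 0 < a) (hb : 0 < b) :
    IntervalIntegrable (fun s => (Ioc (0:ℝ) 1).indicator g s / (s * Real.sqrt s)) volume a b := by
  simp only [div_eq_mul_inv]
  refine (integrable_indicator_of_memLp hg).intervalIntegrable.mul_continuousOn ?_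
  refine ContinuousOn.inv₀ (by fun_prop) fun x hx => ?_
  have : 0 < x := (lt_min ha hb).trans_le hx.1
  have := Real.sqrt_pos.2 this
  positivity

lemma ofL2_of_one_le {r : ℝ} (hr : 1 ≤ r) : ofL2 g r = 0 := by
  rw [ofL2, mul_eq_zero]
  right
  rw [← integral_zero (a := (1:ℝ)) (b := r) (E := ℝ) (μ := volume)]
  refine integral_congr_ae (Eventually.of_forall fun s hs => ?_)
  rw [uIoc_of_le hr] at hs
  rw [indicator_of_notMem (fun h => absurd h.2 (not_le.2 hs.1)), zero_div]

lemma ofL2_congr (h : g =ᵐ[μ01] g') (r : ℝ) : ofL2 g r = ofL2 g' r := by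
  rw [ofL2, ofL2]
  congr 1
  refine integral_congr_ae ?_
  filter_upwards [(ae_restrict_iff' measurableSet_Ioc).1 h] with s hs _
  by_cases hm : s ∈ Ioc (0:ℝ) 1
  · rw [indicator_of_mem hm, indicator_of_mem hm, hs hm]
  · rw [indicator_of_notMem hm, indicator_of_notMem hm]

lemma ofL2_add (hg : MemLp g 2 μ01) (hg' : MemLp g' 2 μ01) {r : ℝ} (hr : 0 < r) :
    ofL2 (g + g') r = ofL2 g r + ofL2 g' r := by
  rw [ofL2, ofL2, ofL2, ← mul_add, ← integral_add (intervalIntegrable_kernel hg one_pos hr)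
    (intervalIntegrable_kernel hg' one_pos hr)]
  simp only [indicator_add', Pi.add_apply, add_div]

lemma ofL2_smul (c : ℝ) (r : ℝ) : ofL2 (c • g) r = c * ofL2 g r := by
  rw [ofL2, ofL2, mul_left_comm]
  congr 1
  rw [← intervalIntegral.integral_const_mul]
  refine integral_congr fun s _ => ?_
  by_cases hm : s ∈ Ioc (0:ℝ) 1
  · simp [hm, mul_div_assoc]
  · simp [hm]

/-- Cauchy-Schwarz against the kernel `r s^(-3/2)`, whose `L²(r,1)` norm is at most one. -/
lemma kernel_sq_le (hg : MemLp g 2 μ01) {r d : ℝ} (hr : 0 < r) (hrd : r ≤ d) (hd : d ≤ 1) :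
    (r * ∫ s in r..d, (Ioc (0:ℝ) 1).indicator g s / (s * Real.sqrt s)) ^ 2 ≤
      ∫ s in (0:ℝ)..d, g s ^ 2 := by
  have hsub : Ioc r d ⊆ Ioc 0 1 := Ioc_subset_Ioc hr.le hd
  have hg2 : IntegrableOn (fun s => g s ^ 2) (Ioc 0 1) volume := hg.integrable_sq
  have hmem : ∀ s ∈ uIcc r d, s ∈ Ioc (0:ℝ) 1 := by
    intro s hs
    rw [uIcc_of_le hrd] at hs
    exact ⟨hr.trans_le hs.1, hs.2.trans hd⟩
  set I := r * ∫ s in r..d, (Ioc (0:ℝ) 1).indicator g s / (s * Real.sqrt s) with hI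
  have hk : IntervalIntegrable (fun s => (r / (s * Real.sqrt s)) ^ 2) volume r d := by
    refine ContinuousOn.intervalIntegrable (ContinuousOn.pow (ContinuousOn.div (by fun_prop)
      (by fun_prop) fun x hx => ?_) 2)
    have := (hmem x hx).1
    have := Real.sqrt_pos.2 this
    positivity
  have hc : IntervalIntegrable
      (fun s => r * ((Ioc (0:ℝ) 1).indicator g s / (s * Real.sqrt s))) volume r d :=
    (intervalIntegrable_kernel hg hr (hr.trans_le hrd)).const_mul r
  have hgi : IntervalIntegrable (fun s => g s ^ 2) volume r d :=
    (intervalIntegrable_iff_integrableOn_Ioc_of_le hrd).2 (hg2.mono_set hsub)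
  have hk1 : ∫ s in r..d, (r / (s * Real.sqrt s)) ^ 2 ≤ 1 := by
    have h1 : ∀ s ∈ uIcc r d, HasDerivAt (fun s : ℝ => -(r ^ 2 / 2) * (s ^ 2)⁻¹)
        ((r / (s * Real.sqrt s)) ^ 2) s := by
      intro s hs
      have hs0 := (hmem s hs).1
      have h := ((hasDerivAt_pow 2 s).fun_inv (pow_ne_zero 2 hs0.ne')).const_mul (-(r ^ 2 / 2))
      refine h.congr_deriv ?_
      rw [div_pow, mul_pow, Real.sq_sqrt hs0.le]
      field_simp
      norm_num
    rw [integral_eq_sub_of_hasDerivAt h1 hk]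
    have : 0 ≤ r ^ 2 / 2 * (d ^ 2)⁻¹ := by positivity
    have h3 : r ^ 2 / 2 * (r ^ 2)⁻¹ = 1 / 2 := by field_simp
    linarith
  -- positivity of the integral of the square of `g - I * kernel`
  have h0 : 0 ≤ ∫ s in r..d, (g s ^ 2 - 2 * I * (r * ((Ioc (0:ℝ) 1).indicator g s /
      (s * Real.sqrt s))) + I ^ 2 * (r / (s * Real.sqrt s)) ^ 2) := by
    refine integral_nonneg hrd fun s hs => ?_
    rw [indicator_of_mem (hmem s (by rwa [uIcc_of_le hrd]))]
    have : g s ^ 2 - 2 * I * (r * (g s / (s * Real.sqrt s))) + I ^ 2 * (r / (s * Real.sqrt s)) ^ 2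
        = (g s - I * (r / (s * Real.sqrt s))) ^ 2 := by ring
    rw [this]
    positivity
  rw [integral_add (hgi.sub (hc.const_mul _)) (hk.const_mul _), integral_sub hgi (hc.const_mul _),
    intervalIntegral.integral_const_mul, intervalIntegral.integral_const_mul,
    intervalIntegral.integral_const_mul, ← hI] at h0
  have h2 : ∫ s in r..d, g s ^ 2 ≤ ∫ s in (0:ℝ)..d, g s ^ 2 := by
    refine integral_mono_interval hr.le hrd le_rfl (Eventually.of_forall fun s => sq_nonneg _) ?_
    exact (intervalIntegrable_iff_integrableOn_Ioc_of_le (hr.le.trans hrd)).2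
      (hg2.mono_set (Ioc_subset_Ioc_right hd))
  nlinarith [mul_le_mul_of_nonneg_left hk1 (sq_nonneg I)]

lemma ofL2_sq_le (hg : MemLp g 2 μ01) {r : ℝ} (hr : r ∈ Ioc (0:ℝ) 1) :
    ofL2 g r ^ 2 ≤ ∫ s in (0:ℝ)..1, g s ^ 2 := by
  have := kernel_sq_le hg hr.1 hr.2 le_rfl
  rwa [integral_symm, mul_neg, neg_sq] at this

lemma continuousOn_ofL2 (hg : MemLp g 2 μ01) : ContinuousOn (ofL2 g) (Ioi 0) := by
  intro x hx
  have hx0 : 0 < x := hx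
  have h := continuousOn_primitive_interval' (a := 1)
    (intervalIntegrable_kernel hg (lt_min (half_pos hx0) one_pos) (b := max (2 * x) 1)
      (lt_max_of_lt_right one_pos)) (by
        rw [uIcc_of_le (min_le_right _ _ |>.trans (le_max_right _ _))]
        exact ⟨min_le_right _ _, le_max_right _ _⟩)
  rw [uIcc_of_le (min_le_right _ _ |>.trans (le_max_right _ _))] at h
  refine ContinuousAt.continuousWithinAt (continuousAt_id.mul (h.continuousAt ?_))
  refine Icc_mem_nhds ?_ ?_
  · exact (min_le_left _ _).trans_lt (by linarith)
  · exact lt_max_of_lt_left (by linarith)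

lemma ofL2_tendsto_zero (hg : MemLp g 2 μ01) : Tendsto (ofL2 g) (𝓝[>] 0) (𝓝 0) := by
  rw [Metric.tendsto_nhds]
  intro ε hε
  have hg2 : IntervalIntegrable (fun s => g s ^ 2) volume 0 1 :=
    (intervalIntegrable_iff_integrableOn_Ioc_of_le zero_le_one).2 hg.integrable_sq
  have hA : Tendsto (fun d => ∫ s in (0:ℝ)..d, g s ^ 2) (𝓝[>] 0) (𝓝 0) := by
    have hc := continuousOn_primitive_interval' hg2 (a := 0) (by simp)
    have h1 : Tendsto (fun d => ∫ s in (0:ℝ)..d, g s ^ 2) (𝓝[>] 0)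
        (𝓝 (∫ s in (0:ℝ)..0, g s ^ 2)) := by
      refine (hc 0 (by simp)).mono_left ?_
      rw [uIcc_of_le zero_le_one]
      exact nhdsWithin_le_of_mem (Icc_mem_nhdsGT zero_lt_one)
    simpa using h1
  obtain ⟨d, hd1, hd⟩ := ((hA.eventually_lt_const (show 0 < (ε / 2) ^ 2 by positivity)).and
    (Ioc_mem_nhdsGT (zero_lt_one (α := ℝ)))).exists
  have hB : Tendsto (fun r : ℝ => r * ∫ s in d..1, (Ioc (0:ℝ) 1).indicator g s /
      (s * Real.sqrt s)) (𝓝[>] 0) (𝓝 0) := by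
    have : Continuous (fun r : ℝ => r * ∫ s in d..1, (Ioc (0:ℝ) 1).indicator g s /
      (s * Real.sqrt s)) := by fun_prop
    simpa using (this.tendsto 0).mono_left nhdsWithin_le_nhds
  filter_upwards [Metric.tendsto_nhds.1 hB (ε / 2) (by positivity), Ioc_mem_nhdsGT hd.1]
    with r hr1 hr2
  have h2 := abs_lt_of_sq_lt_sq ((kernel_sq_le hg hr2.1 hr2.2 hd.2).trans_lt hd1) (by positivity)
  rw [dist_zero_right, Real.norm_eq_abs] at hr1 ⊢
  have h3 : ofL2 g r = -(r * ∫ s in r..d, (Ioc (0:ℝ) 1).indicator g s / (s * Real.sqrt s)) -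
      r * ∫ s in d..1, (Ioc (0:ℝ) 1).indicator g s / (s * Real.sqrt s) := by
    rw [ofL2, integral_symm, ← integral_add_adjacent_intervals
      (intervalIntegrable_kernel hg hr2.1 hd.1) (intervalIntegrable_kernel hg hd.1 one_pos)]
    ring
  rw [h3]
  refine (abs_sub _ _).trans_lt ?_
  rw [abs_neg]
  linarith

lemma ac_ofL2 (hg : MemLp g 2 μ01) {a : ℝ} (ha : a ∈ Ioc (0:ℝ) 1) :
    AbsolutelyContinuousOnInterval (ofL2 g) a 1 :=
  AbsolutelyContinuousOnInterval.fun_mul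
    (contDiffOn_id.absolutelyContinuousOnInterval)
    ((intervalIntegrable_kernel hg ha.1 one_pos).absolutelyContinuousOnInterval_intervalIntegral
      right_mem_uIcc)

lemma deriv_ofL2 (hg : MemLp g 2 μ01) :
    ∀ᵐ r ∂μ01, deriv (ofL2 g) r = ofL2 g r / r + g r / Real.sqrt r := by
  refine ae_Ioc_of_forall fun a ha => ?_
  filter_upwards [(intervalIntegrable_kernel hg ha.1 one_pos).ae_hasDerivAt_integral] with r hr hm
  have hr0 := ha.1.trans_le hm.1
  have h := (hasDerivAt_id r).mul (hr (by rwa [uIcc_of_le ha.2]) 1 right_mem_uIcc)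
  have h2 : deriv (ofL2 g) r = _ := h.deriv
  rw [h2, indicator_of_mem (show r ∈ Ioc (0:ℝ) 1 from ⟨hr0, hm.2⟩), ofL2]
  have := (Real.sqrt_pos.2 hr0).ne'
  simp only [id]
  field_simp

lemma toL2_ofL2 (hg : MemLp g 2 μ01) : toL2 (ofL2 g) =ᵐ[μ01] g := by
  filter_upwards [deriv_ofL2 hg, ae_restrict_mem measurableSet_Ioc] with r hr hm
  have := (Real.sqrt_pos.2 hm.1).ne'
  rw [toL2, hr]
  field_simp
  ring

lemma admDeriv_ofL2 (hg : MemLp g 2 μ01) : AdmDeriv (ofL2 g) := by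
  have hcont : ContinuousOn (ofL2 g) (Ioc 0 1) :=
    (continuousOn_ofL2 hg).mono fun x hx => hx.1
  have hg2 : IntegrableOn (fun s => g s ^ 2) (Ioc 0 1) volume := hg.integrable_sq
  refine ⟨fun a ha => ac_ofL2 hg ha, ?_, ofL2_of_one_le le_rfl, ofL2_tendsto_zero hg⟩
  set E : ℝ → ℝ := fun r => ((deriv (ofL2 g) r) ^ 2 + (ofL2 g r) ^ 2 / r ^ 2) * r with hE
  have hEm : AEStronglyMeasurable E μ01 := by
    have h1 := (hcont.aestronglyMeasurable (μ := volume) measurableSet_Ioc).aemeasurable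
    have h2 := measurable_deriv (ofL2 g)
    refine AEMeasurable.aestronglyMeasurable ?_
    rw [hE]
    fun_prop
  have hEnn : ∀ r ∈ Ioc (0:ℝ) 1, 0 ≤ E r := fun r hr => by
    have := hr.1
    simp only [hE]
    positivity
  -- integrability away from the origin
  have hloc : ∀ a ∈ Ioc (0:ℝ) 1, IntegrableOn E (Ioc a 1) volume := by
    intro a ha
    have hsub : Ioc a 1 ⊆ Ioc 0 1 := Ioc_subset_Ioc_left ha.1.le
    have hw2 : IntegrableOn (fun r => 3 * ofL2 g r ^ 2 / r) (Ioc a 1) volume := by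
      refine (ContinuousOn.integrableOn_Icc ?_).mono_set Ioc_subset_Icc_self
      have : ContinuousOn (ofL2 g) (Icc a 1) := hcont.mono fun x hx => ⟨ha.1.trans_le hx.1, hx.2⟩
      exact (continuousOn_const.mul (this.pow 2)).div continuousOn_id
        fun x hx => (ha.1.trans_le hx.1).ne'
    refine (hw2.add ((hg2.mono_set hsub).const_mul 2)).mono'
      (hEm.mono_measure (Measure.restrict_mono hsub le_rfl)) ?_
    filter_upwards [ae_restrict_of_ae_restrict_of_subset hsub (deriv_ofL2 hg),
      ae_restrict_mem measurableSet_Ioc] with r hr hm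
    have hr0 := (hsub hm).1
    rw [Real.norm_eq_abs, abs_of_nonneg (hEnn r (hsub hm))]
    simp only [hE, hr, Pi.add_apply]
    have hs := Real.sq_sqrt hr0.le
    have hs0 := (Real.sqrt_pos.2 hr0).ne'
    have h1 : (ofL2 g r / r + g r / Real.sqrt r) ^ 2 ≤
        2 * (ofL2 g r / r) ^ 2 + 2 * (g r / Real.sqrt r) ^ 2 := by
      nlinarith [sq_nonneg (ofL2 g r / r - g r / Real.sqrt r)]
    have h2 : (g r / Real.sqrt r) ^ 2 * r = g r ^ 2 := by
      rw [div_pow, hs]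
      field_simp
    calc _ ≤ (2 * (ofL2 g r / r) ^ 2 + 2 * (g r / Real.sqrt r) ^ 2 + ofL2 g r ^ 2 / r ^ 2) * r := by
          gcongr
      _ = 3 * ofL2 g r ^ 2 / r + 2 * ((g r / Real.sqrt r) ^ 2 * r) := by field_simp; ring
      _ = _ := by rw [h2]
  have hmem : ∀ n : ℕ, 1 / ((n:ℝ) + 1) ∈ Ioc (0:ℝ) 1 := fun n => by
    refine ⟨by positivity, ?_⟩
    rw [div_le_one (by positivity)]
    linarith [n.cast_nonneg (α := ℝ)]
  refine integrableOn_Ioc_of_intervalIntegral_norm_bounded_left (l := atTop)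
    (a := fun n : ℕ => 1 / ((n:ℝ) + 1)) (I := ∫ s in (0:ℝ)..1, g s ^ 2)
    (fun n => hloc _ (hmem n)) tendsto_one_div_add_atTop_nhds_zero_nat
    (Eventually.of_forall fun n => ?_)
  set a := 1 / ((n:ℝ) + 1)
  have ha := hmem n
  have hsub : Ioc a 1 ⊆ Ioc 0 1 := Ioc_subset_Ioc_left ha.1.le
  have hEeq : E = fun r => (deriv (ofL2 g) r * deriv (ofL2 g) r + ofL2 g r * ofL2 g r / r ^ 2) * r := by
    funext r
    simp only [hE]
    ring
  have h1 := integral_toL2_mul ha (ac_ofL2 hg ha) (ac_ofL2 hg ha) (by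
    rw [← hEeq, intervalIntegrable_iff_integrableOn_Ioc_of_le ha.2]
    exact hloc _ ha)
  rw [← hEeq, ofL2_of_one_le le_rfl] at h1
  have h2 : ∫ x in Ioc a 1, ‖E x‖ = ∫ x in a..1, E x := by
    rw [integral_of_le ha.2]
    refine setIntegral_congr_fun measurableSet_Ioc fun r hr => ?_
    exact (Real.norm_eq_abs _).trans (abs_of_nonneg (hEnn r (hsub hr)))
  have h3 : ∫ r in a..1, toL2 (ofL2 g) r * toL2 (ofL2 g) r = ∫ r in a..1, g r ^ 2 := by
    refine integral_congr_ae ?_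
    filter_upwards [(ae_restrict_iff' measurableSet_Ioc).1 (toL2_ofL2 hg)] with r hr hm
    rw [uIoc_of_le ha.2] at hm
    rw [hr (hsub hm), sq]
  have h4 : ∫ r in a..1, g r ^ 2 ≤ ∫ s in (0:ℝ)..1, g s ^ 2 := by
    refine integral_mono_interval ha.1.le ha.2 le_rfl (Eventually.of_forall fun s => sq_nonneg _) ?_
    exact (intervalIntegrable_iff_integrableOn_Ioc_of_le zero_le_one).2 hg2
  rw [h2, h1, h3]
  nlinarith [mul_self_nonneg (ofL2 g a)]

end OfL2

end Radial

/-! ### Admissible functions as primitives -/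

section Correspondence

open Topology intervalIntegral

/-- The primitive of `ofL2 g` vanishing at `1`. -/
noncomputable def primL2 (g : ℝ → ℝ) (r : ℝ) : ℝ := ∫ s in (1:ℝ)..r, ofL2 g s

variable {g g' u v : ℝ → ℝ}

lemma intervalIntegrable_ofL2 (hg : MemLp g 2 μ01) {a b : ℝ} (ha : 0 < a) (hb : 0 < b) :
    IntervalIntegrable (ofL2 g) volume a b :=
  ((continuousOn_ofL2 hg).mono fun _ hx => (lt_min ha hb).trans_le hx.1).intervalIntegrable

lemma hasDerivAt_primL2 (hg : MemLp g 2 μ01) {r : ℝ} (hr : 0 < r) :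
    HasDerivAt (primL2 g) (ofL2 g r) r :=
  integral_hasDerivAt_right (intervalIntegrable_ofL2 hg one_pos hr)
    ((continuousOn_ofL2 hg).stronglyMeasurableAtFilter isOpen_Ioi r hr)
    ((continuousOn_ofL2 hg).continuousAt (Ioi_mem_nhds hr))

lemma deriv_deriv_primL2 (hg : MemLp g 2 μ01) {r : ℝ} (hr : 0 < r) :
    deriv (deriv (primL2 g)) r = deriv (ofL2 g) r := by
  refine EventuallyEq.deriv_eq ?_
  filter_upwards [Ioi_mem_nhds hr] with s hs
  exact (hasDerivAt_primL2 hg hs).deriv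

lemma admissible_primL2 (hg : MemLp g 2 μ01) : DirichletAdmissible (primL2 g) := by
  have hd : ∀ r, 0 < r → deriv (primL2 g) r = ofL2 g r := fun r hr => (hasDerivAt_primL2 hg hr).deriv
  have hA := admDeriv_ofL2 hg
  refine ⟨fun r hr => (hasDerivAt_primL2 hg hr.1).differentiableAt, ?_, fun a ha b hb => ?_, ?_,
    integral_same, ?_, ?_⟩
  · exact hA.continuousOn.congr fun r hr => hd r hr.1
  · rw [hd a ha.1, hd b hb.1]
    have h := ((ac_ofL2 hg ⟨lt_min ha.1 hb.1, min_le_of_left_le ha.2⟩).mono (c := a) (d := b) (by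
      rw [uIcc_of_le (min_le_of_left_le ha.2)]
      exact Icc_subset_Icc le_rfl (max_le ha.2 hb.2))).integral_deriv_eq_sub
    rw [← h]
    refine integral_congr fun r hr => (deriv_deriv_primL2 hg ?_).symm
    exact (lt_min ha.1 hb.1).trans_le hr.1
  · rw [intervalIntegrable_iff_integrableOn_Ioc_of_le zero_le_one]
    refine hA.energy.congr_fun (fun r hr => ?_) measurableSet_Ioc
    simp only [deriv_deriv_primL2 hg hr.1, hd r hr.1]
  · rw [hd 1 one_pos, hA.one]
  · refine hA.zero.congr' ?_
    filter_upwards [self_mem_nhdsWithin] with r hr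
    exact (hd r hr).symm

lemma toL2_deriv_primL2 (hg : MemLp g 2 μ01) : toL2 (deriv (primL2 g)) =ᵐ[μ01] g := by
  filter_upwards [toL2_ofL2 hg, ae_restrict_mem measurableSet_Ioc] with r hr hm
  rw [← hr, toL2, toL2, deriv_deriv_primL2 hg hm.1, (hasDerivAt_primL2 hg hm.1).deriv]

lemma DirichletAdmissible.admDeriv (hu : DirichletAdmissible u) : AdmDeriv (deriv u) := by
  obtain ⟨-, -, hftc, hen, -, h1, h0⟩ := hu
  rw [intervalIntegrable_iff_integrableOn_Ioc_of_le zero_le_one] at hen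
  refine ⟨fun a ha => ?_, hen, h1, h0⟩
  have hii : IntervalIntegrable (deriv (deriv u)) volume a 1 := by
    rw [intervalIntegrable_iff_integrableOn_Ioc_of_le ha.2]
    have hsub : Ioc a 1 ⊆ Ioc 0 1 := Ioc_subset_Ioc_left ha.1.le
    have hc : IntegrableOn (fun _ : ℝ => (1:ℝ)) (Ioc a 1) volume := by simp
    refine (hc.add ((hen.mono_set hsub).const_mul a⁻¹)).mono'
      (measurable_deriv _).aestronglyMeasurable ?_
    filter_upwards [ae_restrict_mem measurableSet_Ioc] with r hr
    have hr0 := (hsub hr).1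
    have e1 : 1 ≤ a⁻¹ * r := by
      rw [inv_mul_eq_div, one_le_div ha.1]
      exact hr.1.le
    have e2 : (deriv (deriv u) r) ^ 2 ≤ ((deriv (deriv u) r) ^ 2 + (deriv u r) ^ 2 / r ^ 2) := by
      have : 0 ≤ (deriv u r) ^ 2 / r ^ 2 := by positivity
      linarith
    have e3 : (deriv (deriv u) r) ^ 2 + (deriv u r) ^ 2 / r ^ 2 ≤
        ((deriv (deriv u) r) ^ 2 + (deriv u r) ^ 2 / r ^ 2) * (a⁻¹ * r) :=
      le_mul_of_one_le_right (by positivity) e1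
    have e4 : |deriv (deriv u) r| ≤ 1 + (deriv (deriv u) r) ^ 2 := by
      rw [← sq_abs]
      nlinarith [sq_nonneg (|deriv (deriv u) r| - 1)]
    rw [Real.norm_eq_abs, Pi.add_apply]
    linarith
  have h := (hii.absolutelyContinuousOnInterval_intervalIntegral (c := 1) right_mem_uIcc)
  refine h.congr' fun x hx => ?_
  rw [uIcc_of_le ha.2] at hx
  have := hftc 1 ⟨one_pos, le_rfl⟩ x ⟨ha.1.trans_le hx.1, hx.2⟩
  rw [h1, sub_zero] at this
  exact this.symm

lemma DirichletAdmissible.eq_primL2 (hu : DirichletAdmissible u) {r : ℝ} (hr : r ∈ Ioc (0:ℝ) 1) :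
    u r = primL2 (toL2 (deriv u)) r := by
  have hmem : ∀ s ∈ uIcc 1 r, s ∈ Ioc (0:ℝ) 1 := by
    intro s hs
    rw [uIcc_of_ge hr.2] at hs
    exact ⟨hr.1.trans_le hs.1, hs.2⟩
  have h : ∫ s in (1:ℝ)..r, deriv u s = u r - u 1 :=
    integral_eq_sub_of_hasDerivAt (fun s hs => (hu.1 s (hmem s hs)).hasDerivAt)
      (hu.2.1.mono hmem).intervalIntegrable
  rw [hu.2.2.2.2.1, sub_zero] at h
  rw [← h, primL2]
  exact integral_congr fun s hs => (hu.admDeriv.ofL2_toL2 (hmem s hs)).symm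

/-- Test functions are admissible: they vanish near both endpoints. -/
lemma admissible_test {φ : ℝ → ℝ} (hφ : ContDiff ℝ (⊤ : ℕ∞) φ) (hs : tsupport φ ⊆ Ioo 0 1) :
    DirichletAdmissible φ := by
  have hd : ContDiff ℝ (⊤ : ℕ∞) (deriv φ) := (contDiff_infty_iff_deriv.1 hφ).2
  have hd2 : ContDiff ℝ (⊤ : ℕ∞) (deriv (deriv φ)) := (contDiff_infty_iff_deriv.1 hd).2
  have hz : ∀ x, x ∉ Ioo (0:ℝ) 1 → deriv φ =ᶠ[𝓝 x] 0 := fun x hx =>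
    notMem_tsupport_iff_eventuallyEq.1 fun h => hx (hs (closure_minimal (support_deriv_subset)
      (isClosed_tsupport φ) h))
  have h0 := hz 0 (by simp)
  refine ⟨fun r _ => (hφ.differentiable (by simp)).differentiableAt, hd.continuous.continuousOn,
    fun a _ b _ => ?_, ?_, image_eq_zero_of_notMem_tsupport fun h => by simpa using hs h,
    (hz 1 (by simp)).self_of_nhds, ?_⟩
  · exact (integral_deriv_eq_sub (fun x _ => (hd.differentiable (by simp)).differentiableAt)
      (hd2.continuous.intervalIntegrable _ _)).symm
  · have hc : Continuous fun r => (deriv φ r) ^ 2 / r ^ 2 := by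
      rw [continuous_iff_continuousAt]
      intro r
      rcases eq_or_ne r 0 with rfl | hr
      · refine (continuousAt_const (y := (0:ℝ))).congr ?_
        filter_upwards [h0] with r hr
        simp [hr]
      · exact (hd.continuous.continuousAt.pow 2).div (continuousAt_id.pow 2) (pow_ne_zero 2 hr)
    exact (((hd2.continuous.pow 2).add hc).mul continuous_id).intervalIntegrable _ _
  · have := hd.continuous.tendsto 0
    rw [h0.self_of_nhds] at this
    exact this.mono_left nhdsWithin_le_nhds

end Correspondence

/-! ### The cubic and source terms on `L²(0,1)` -/

section Assembly

open Topology intervalIntegral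

/-- The Hilbert space `L²(0,1)`. -/
abbrev L2I : Type := Lp ℝ 2 μ01

lemma inner_L2I (p q : L2I) : inner ℝ p q = ∫ r in (0:ℝ)..1, p r * q r := by
  rw [L2.inner_def, integral_of_le zero_le_one]
  simp [mul_comm]

lemma norm_sq_L2I (p : L2I) : ‖p‖ ^ 2 = ∫ r in (0:ℝ)..1, p r ^ 2 := by
  rw [← real_inner_self_eq_norm_sq, inner_L2I]
  simp only [sq]

lemma abs_ofL2_le (p : L2I) {r : ℝ} (hr : r ∈ Ioc (0:ℝ) 1) : |ofL2 p r| ≤ ‖p‖ := by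
  refine abs_le_of_sq_le_sq ?_ (norm_nonneg _)
  rw [norm_sq_L2I]
  exact ofL2_sq_le (Lp.memLp p) hr

lemma ofL2_add_L2I (p q : L2I) {r : ℝ} (hr : 0 < r) :
    ofL2 (p + q : L2I) r = ofL2 p r + ofL2 q r := by
  rw [ofL2_congr (Lp.coeFn_add p q), ofL2_add (Lp.memLp p) (Lp.memLp q) hr]

lemma ofL2_smul_L2I (c : ℝ) (p : L2I) (r : ℝ) : ofL2 (c • p : L2I) r = c * ofL2 p r := by
  rw [ofL2_congr (Lp.coeFn_smul c p), ofL2_smul]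

lemma abs_primL2_le (p : L2I) {r : ℝ} (hr : r ∈ Ioc (0:ℝ) 1) : |primL2 p r| ≤ ‖p‖ := by
  have h : ∀ s ∈ uIoc 1 r, ‖ofL2 p s‖ ≤ ‖p‖ := by
    intro s hs
    rw [uIoc_of_ge hr.2] at hs
    exact abs_ofL2_le p ⟨hr.1.trans hs.1, hs.2⟩
  refine (norm_integral_le_of_norm_le_const h).trans ?_
  refine mul_le_of_le_one_right (norm_nonneg _) ?_
  rw [abs_le]
  constructor <;> linarith [hr.1, hr.2]

lemma primL2_add_L2I (p q : L2I) {r : ℝ} (hr : 0 < r) :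
    primL2 (p + q : L2I) r = primL2 p r + primL2 q r := by
  rw [primL2, primL2, primL2, ← integral_add (intervalIntegrable_ofL2 (Lp.memLp p) one_pos hr)
    (intervalIntegrable_ofL2 (Lp.memLp q) one_pos hr)]
  exact integral_congr fun s hs => ofL2_add_L2I p q ((lt_min one_pos hr).trans_le hs.1)

lemma primL2_smul_L2I (c : ℝ) (p : L2I) (r : ℝ) : primL2 (c • p : L2I) r = c * primL2 p r := by
  rw [primL2, primL2, ← intervalIntegral.integral_const_mul]
  exact integral_congr fun s _ => ofL2_smul_L2I c p s

/-- Point evaluation `p ↦ ofL2 p r` as a continuous linear functional. -/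
noncomputable def evalL2 (r : ℝ) (hr : r ∈ Ioc (0:ℝ) 1) : L2I →L[ℝ] ℝ :=
  LinearMap.mkContinuous
    { toFun := fun p => ofL2 p r
      map_add' := fun p q => ofL2_add_L2I p q hr.1
      map_smul' := fun c p => ofL2_smul_L2I c p r } 1
    (fun p => by simpa using abs_ofL2_le p hr)

lemma aesm_ofL2 (p : L2I) : AEStronglyMeasurable (ofL2 p) μ01 := (admDeriv_ofL2 (Lp.memLp p)).aesm

/-- The cubic term of the energy: `B(p,q,s) = ∫₀¹ w_p w_q w_s dr` with `w_p = ofL2 p`. -/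
noncomputable def triL2 (p q s : L2I) : ℝ := ∫ r in (0:ℝ)..1, ofL2 p r * ofL2 q r * ofL2 s r

lemma abs_tri_le (p q s : L2I) {r : ℝ} (hr : r ∈ Ioc (0:ℝ) 1) :
    ‖ofL2 p r * ofL2 q r * ofL2 s r‖ ≤ ‖p‖ * ‖q‖ * ‖s‖ := by
  rw [Real.norm_eq_abs, abs_mul, abs_mul]
  have h1 := abs_ofL2_le p hr
  have h2 := abs_ofL2_le q hr
  have h3 := abs_ofL2_le s hr
  gcongr

lemma intervalIntegrable_tri (p q s : L2I) :
    IntervalIntegrable (fun r => ofL2 p r * ofL2 q r * ofL2 s r) volume 0 1 := by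
  rw [intervalIntegrable_iff_integrableOn_Ioc_of_le zero_le_one]
  refine Integrable.of_bound (((aesm_ofL2 p).mul (aesm_ofL2 q)).mul (aesm_ofL2 s))
    (‖p‖ * ‖q‖ * ‖s‖) ?_
  filter_upwards [ae_restrict_mem measurableSet_Ioc] with r hr using abs_tri_le p q s hr

/-- Weak convergence implies pointwise convergence of `ofL2` with a uniform bound, so that dominated
convergence applies to the cubic term. -/
lemma isCompactTrilinear_triL2 : IsCompactTrilinear triL2 where
  add_left a b c d := by
    rw [triL2, triL2, triL2, ← integral_add (intervalIntegrable_tri a c d)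
      (intervalIntegrable_tri b c d)]
    refine integral_congr_ae (Eventually.of_forall fun r hr => ?_)
    rw [uIoc_of_le zero_le_one] at hr
    rw [ofL2_add_L2I a b hr.1]
    ring
  smul_left t a c d := by
    rw [triL2, triL2, ← intervalIntegral.integral_const_mul]
    refine integral_congr fun r _ => ?_
    simp only [ofL2_smul_L2I]
    ring
  comm_left a b c := by simp only [triL2, mul_comm (ofL2 a _)]
  comm_right a b c := by
    simp only [triL2]
    exact integral_congr fun r _ => by ring
  bound a b c := by
    have := norm_integral_le_of_norm_le_const (a := 0) (b := 1)
      (f := fun r => ofL2 a r * ofL2 b r * ofL2 c r) (C := ‖a‖ * ‖b‖ * ‖c‖) (fun r hr => by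
        rw [uIoc_of_le zero_le_one] at hr
        exact abs_tri_le a b c hr)
    simpa [triL2] using this
  tendsto a b c a' b' c' ha hb hc := by
    obtain ⟨Ra, hRa⟩ := ha.1
    obtain ⟨Rb, hRb⟩ := hb.1
    obtain ⟨Rc, hRc⟩ := hc.1
    refine tendsto_integral_filter_of_dominated_convergence (fun _ => Ra * Rb * Rc)
      (Eventually.of_forall fun n => ?_) (Eventually.of_forall fun n =>
        Eventually.of_forall fun r hr => ?_) (by simp) (Eventually.of_forall fun r hr => ?_)
    · rw [uIoc_of_le zero_le_one]
      exact ((aesm_ofL2 _).mul (aesm_ofL2 _)).mul (aesm_ofL2 _)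
    · rw [uIoc_of_le zero_le_one] at hr
      refine (abs_tri_le _ _ _ hr).trans ?_
      have h1 := hRa n
      have h2 := hRb n
      have h3 := hRc n
      have h4 := (norm_nonneg _).trans h1
      have h5 := (norm_nonneg _).trans h2
      gcongr
    · rw [uIoc_of_le zero_le_one] at hr
      exact ((ha.clm (evalL2 r hr)).mul (hb.clm (evalL2 r hr))).mul (hc.clm (evalL2 r hr))

lemma intervalIntegrable_source {f : ℝ → ℝ}
    (hf_int : IntegrableOn (fun r => f r * r) (Ioc 0 1) volume) (p : L2I) :
    IntervalIntegrable (fun r => f r * primL2 p r * r) volume 0 1 := by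
  rw [intervalIntegrable_iff_integrableOn_Ioc_of_le zero_le_one]
  have hm : AEStronglyMeasurable (primL2 p) μ01 := by
    refine ContinuousOn.aestronglyMeasurable (fun r hr => ?_) measurableSet_Ioc
    exact (hasDerivAt_primL2 (Lp.memLp p) hr.1).continuousAt.continuousWithinAt
  have := hf_int.bdd_mul (c := ‖p‖) hm (by
    filter_upwards [ae_restrict_mem measurableSet_Ioc] with r hr using abs_primL2_le p hr)
  refine this.congr (Eventually.of_forall fun r => ?_)
  simp only
  ring

/-- The source term `p ↦ ∫₀¹ f u_p r dr`, with `u_p = primL2 p`, as a continuous linear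
functional. -/
noncomputable def sourceL2 (f : ℝ → ℝ) (hf_nonneg : ∀ r ∈ Icc (0:ℝ) 1, 0 ≤ f r)
    (hf_int : IntegrableOn (fun r => f r * r) (Ioc 0 1) volume) : L2I →L[ℝ] ℝ :=
  LinearMap.mkContinuous
    { toFun := fun p => ∫ r in (0:ℝ)..1, f r * primL2 p r * r
      map_add' := fun p q => by
        rw [← integral_add (intervalIntegrable_source hf_int p)
          (intervalIntegrable_source hf_int q)]
        refine integral_congr_ae (Eventually.of_forall fun r hr => ?_)
        rw [uIoc_of_le zero_le_one] at hr
        rw [primL2_add_L2I p q hr.1]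
        ring
      map_smul' := fun c p => by
        rw [RingHom.id_apply, smul_eq_mul, ← intervalIntegral.integral_const_mul]
        refine integral_congr fun r _ => ?_
        simp only [primL2_smul_L2I]
        ring } (∫ r in (0:ℝ)..1, f r * r)
    (fun p => by
      have hfi := (intervalIntegrable_iff_integrableOn_Ioc_of_le zero_le_one).2 hf_int
      rw [← intervalIntegral.integral_mul_const]
      refine norm_integral_le_of_norm_le zero_le_one (Eventually.of_forall fun r hr => ?_)
        (hfi.mul_const _)
      have h1 := hf_nonneg r ⟨hr.1.le, hr.2⟩
      have h2 := abs_primL2_le p hr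
      have h3 := hr.1
      rw [Real.norm_eq_abs, abs_mul, abs_mul, abs_of_nonneg h1, abs_of_pos h3]
      calc f r * |primL2 p r| * r = f r * r * |primL2 p r| := by ring
        _ ≤ f r * r * ‖p‖ := by gcongr)

end Assembly

/-! ### Transfer back to the radial problem -/

section Final

open Topology intervalIntegral

variable {f u v : ℝ → ℝ}

lemma primL2_congr {g g' : ℝ → ℝ} (h : g =ᵐ[μ01] g') : primL2 g = primL2 g' := by
  funext r
  simp only [primL2, ofL2_congr h]

/-- The point of `L²(0,1)` representing an admissible function. -/
noncomputable def repL2 (hu : DirichletAdmissible u) : L2I := hu.admDeriv.memLp.toLp (toL2 (deriv u))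

lemma coeFn_repL2 (hu : DirichletAdmissible u) : repL2 hu =ᵐ[μ01] toL2 (deriv u) :=
  MemLp.coeFn_toLp _

lemma ofL2_repL2 (hu : DirichletAdmissible u) {r : ℝ} (hr : r ∈ Ioc (0:ℝ) 1) :
    ofL2 (repL2 hu) r = deriv u r := by
  rw [ofL2_congr (coeFn_repL2 hu), hu.admDeriv.ofL2_toL2 hr]

lemma primL2_repL2 (hu : DirichletAdmissible u) {r : ℝ} (hr : r ∈ Ioc (0:ℝ) 1) :
    primL2 (repL2 hu) r = u r := by
  rw [primL2_congr (coeFn_repL2 hu), hu.eq_primL2 hr]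

lemma integral_congr_Ioc {F G : ℝ → ℝ} (h : ∀ r ∈ Ioc (0:ℝ) 1, F r = G r) :
    ∫ r in (0:ℝ)..1, F r = ∫ r in (0:ℝ)..1, G r := by
  refine integral_congr_ae (Eventually.of_forall fun r hr => ?_)
  rw [uIoc_of_le zero_le_one] at hr
  exact h r hr

lemma inner_repL2 (hu : DirichletAdmissible u) (hv : DirichletAdmissible v) :
    ∫ r in (0:ℝ)..1, (deriv (deriv u) r * deriv (deriv v) r + deriv u r * deriv v r / r ^ 2) * r =
      inner ℝ (repL2 hu) (repL2 hv) := by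
  rw [hu.admDeriv.energy_eq hv.admDeriv, inner_L2I]
  refine integral_congr_ae ?_
  filter_upwards [(ae_restrict_iff' measurableSet_Ioc).1 (coeFn_repL2 hu),
    (ae_restrict_iff' measurableSet_Ioc).1 (coeFn_repL2 hv)] with r h1 h2 hr
  rw [uIoc_of_le zero_le_one] at hr
  rw [h1 hr, h2 hr]

lemma norm_sq_repL2 (hu : DirichletAdmissible u) :
    ∫ r in (0:ℝ)..1, ((deriv (deriv u) r) ^ 2 + (deriv u r) ^ 2 / r ^ 2) * r = ‖repL2 hu‖ ^ 2 := by
  rw [← real_inner_self_eq_norm_sq, ← inner_repL2 hu hu]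
  simp only [sq]

lemma dist_sq_repL2 (hu : DirichletAdmissible u) (hv : DirichletAdmissible v) :
    ∫ r in (0:ℝ)..1, ((deriv (deriv v) r - deriv (deriv u) r) ^ 2
      + (deriv v r - deriv u r) ^ 2 / r ^ 2) * r = ‖repL2 hv - repL2 hu‖ ^ 2 := by
  have hi : ∀ {a b : ℝ → ℝ}, DirichletAdmissible a → DirichletAdmissible b → IntervalIntegrable
      (fun r => (deriv (deriv a) r * deriv (deriv b) r + deriv a r * deriv b r / r ^ 2) * r)
      volume 0 1 := fun ha hb =>
    (intervalIntegrable_iff_integrableOn_Ioc_of_le zero_le_one).2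
      (ha.admDeriv.integrable_cross hb.admDeriv)
  rw [norm_sub_sq_real, ← real_inner_self_eq_norm_sq, ← real_inner_self_eq_norm_sq,
    ← inner_repL2 hv hv, ← inner_repL2 hv hu, ← inner_repL2 hu hu,
    ← intervalIntegral.integral_const_mul, ← integral_sub (hi hv hv) ((hi hv hu).const_mul 2),
    ← integral_add ((hi hv hv).sub ((hi hv hu).const_mul 2)) (hi hu hu)]
  congr 1
  funext r
  ring

lemma sourceL2_repL2 (h0 : ∀ r ∈ Icc (0:ℝ) 1, 0 ≤ f r)
    (h1 : IntegrableOn (fun r => f r * r) (Ioc 0 1) volume) (hu : DirichletAdmissible u) :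
    sourceL2 f h0 h1 (repL2 hu) = ∫ r in (0:ℝ)..1, f r * u r * r := by
  change ∫ r in (0:ℝ)..1, f r * primL2 (repL2 hu) r * r = _
  exact integral_congr_Ioc fun r hr => by rw [primL2_repL2 hu hr]

lemma triL2_repL2 (hu : DirichletAdmissible u) (hv : DirichletAdmissible v) :
    triL2 (repL2 hu) (repL2 hu) (repL2 hv) = ∫ r in (0:ℝ)..1, (deriv u r) ^ 2 * deriv v r :=
  integral_congr_Ioc fun r hr => by rw [ofL2_repL2 hu hr, ofL2_repL2 hv hr, sq]

/-- The isometry carries the energy `J_λ` to the abstract cubic functional. -/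
lemma Jfun_eq_absJ (lam : ℝ) (h0 : ∀ r ∈ Icc (0:ℝ) 1, 0 ≤ f r)
    (h1 : IntegrableOn (fun r => f r * r) (Ioc 0 1) volume) (hu : DirichletAdmissible u) :
    Jfun lam f u = absJ triL2 (lam • sourceL2 f h0 h1) (repL2 hu) := by
  rw [Jfun, absJ, norm_sq_repL2 hu, triL2_repL2 hu hu, smul_apply,
    sourceL2_repL2, smul_eq_mul]
  simp only [← pow_succ]
  ring

lemma repL2_primL2 (g : L2I) : repL2 (admissible_primL2 (Lp.memLp g)) = g :=
  Lp.ext ((coeFn_repL2 _).trans (toL2_deriv_primL2 (Lp.memLp g)))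

/-- Critical points of the abstract functional give weak solutions. -/
lemma weakSol_primL2 (lam : ℝ) (h0 : ∀ r ∈ Icc (0:ℝ) 1, 0 ≤ f r)
    (h1 : IntegrableOn (fun r => f r * r) (Ioc 0 1) volume) {g : L2I}
    (hg : ∀ ψ, inner ℝ g ψ + triL2 g g ψ / 2 = (lam • sourceL2 f h0 h1) ψ) :
    DirichletWeakSol lam f (primL2 g) := by
  have hA := admissible_primL2 (Lp.memLp g)
  refine ⟨hA, fun φ hφ _ hs => ?_⟩
  have hT := admissible_test hφ hs
  have h := hg (repL2 hT)
  have hr : g = repL2 hA := (repL2_primL2 g).symm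
  have h2 : inner ℝ g (repL2 hT) = inner ℝ (repL2 hA) (repL2 hT) := by rw [← hr]
  have h3 : triL2 g g (repL2 hT) = triL2 (repL2 hA) (repL2 hA) (repL2 hT) := by rw [← hr]
  rw [h2, h3, smul_apply, sourceL2_repL2, smul_eq_mul, triL2_repL2,
    ← inner_repL2] at h
  rw [← h]
  ring

lemma Jfun_congr (lam : ℝ) (h : EqOn u v (Ioc 0 1)) : Jfun lam f u = Jfun lam f v := by
  have hd : EqOn (deriv u) (deriv v) (Ioo 0 1) := fun r hr => by
    refine EventuallyEq.deriv_eq ?_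
    filter_upwards [isOpen_Ioo.mem_nhds hr] with s hs using h ⟨hs.1, hs.2.le⟩
  have hdd : EqOn (deriv (deriv u)) (deriv (deriv v)) (Ioo 0 1) := fun r hr => by
    refine EventuallyEq.deriv_eq ?_
    filter_upwards [isOpen_Ioo.mem_nhds hr] with s hs using hd hs
  have key : ∀ {F G : ℝ → ℝ}, (∀ r ∈ Ioo (0:ℝ) 1, F r = G r) →
      ∫ r in (0:ℝ)..1, F r = ∫ r in (0:ℝ)..1, G r := fun hFG => by
    rw [integral_of_le zero_le_one, integral_of_le zero_le_one]
    exact MeasureTheory.integral_congr_ae (ae_Ioc_of_ae_Ioo (Eventually.of_forall hFG))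
  rw [Jfun, Jfun, key fun r hr => by rw [hd hr, hdd hr], key (F := fun r => deriv u r ^ 3)
    fun r hr => by rw [hd hr], key (F := fun r => f r * u r * r)
    fun r hr => by rw [h ⟨hr.1, hr.2.le⟩]]

/-- The explicit admissible function used to see that the source and the cubic term are nonzero. -/
def bump (r : ℝ) : ℝ := (1 - r ^ 2) ^ 2

lemma deriv_bump : deriv bump = fun r => -4 * r + 4 * r ^ 3 := by
  funext r
  have h := (((hasDerivAt_pow 2 r).const_sub 1).fun_pow 2).deriv
  change deriv (fun r : ℝ => (1 - r ^ 2) ^ 2) r = _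
  rw [h]
  norm_num
  ring

lemma deriv_deriv_bump : deriv (deriv bump) = fun r => -4 + 12 * r ^ 2 := by
  rw [deriv_bump]
  funext r
  have h := (((hasDerivAt_id r).const_mul (-4)).fun_add ((hasDerivAt_pow 3 r).const_mul 4)).deriv
  simp only [id] at h
  rw [h]
  norm_num
  ring

lemma admissible_bump : DirichletAdmissible bump := by
  refine ⟨fun r _ => ?_, ?_, fun a _ b _ => ?_, ?_, by simp [bump], by simp [deriv_bump], ?_⟩
  · have : Differentiable ℝ bump := by unfold bump; fun_prop
    exact this r
  · rw [deriv_bump]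
    fun_prop
  · refine (integral_deriv_eq_sub (fun x _ => ?_) ?_).symm
    · rw [deriv_bump]
      fun_prop
    · rw [deriv_deriv_bump]
      exact Continuous.intervalIntegrable (by fun_prop) _ _
  · have hc : Continuous fun r : ℝ => ((-4 + 12 * r ^ 2) ^ 2 + (-4 + 4 * r ^ 2) ^ 2) * r := by
      fun_prop
    refine (hc.intervalIntegrable 0 1).congr fun r hr => ?_
    rw [uIoc_of_le zero_le_one] at hr
    have := hr.1.ne'
    rw [deriv_deriv_bump, deriv_bump]
    simp only
    field_simp
  · have hc : Continuous (deriv bump) := by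
      rw [deriv_bump]
      fun_prop
    have := hc.tendsto 0
    rw [show deriv bump 0 = 0 by simp [deriv_bump]] at this
    exact this.mono_left nhdsWithin_le_nhds

lemma triL2_bump_ne_zero :
    triL2 (repL2 admissible_bump) (repL2 admissible_bump) (repL2 admissible_bump) ≠ 0 := by
  rw [triL2_repL2]
  have hc : Continuous fun r => -((deriv bump r) ^ 2 * deriv bump r) := by
    rw [deriv_bump]
    fun_prop
  have : 0 < ∫ r in (0:ℝ)..1, -((deriv bump r) ^ 2 * deriv bump r) := by
    refine intervalIntegral_pos_of_pos_on (hc.intervalIntegrable _ _) (fun r hr => ?_) one_pos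
    have h : deriv bump r < 0 := by
      simp only [deriv_bump]
      have h2 : r ^ 2 < 1 := by nlinarith [hr.1, hr.2]
      nlinarith [mul_pos hr.1 (sub_pos.2 h2)]
    nlinarith [mul_pos (pow_pos (neg_pos.2 h) 2) (neg_pos.2 h)]
  rw [intervalIntegral.integral_neg] at this
  intro h
  rw [h] at this
  simp at this

lemma source_bump_pos (h0 : ∀ r ∈ Icc (0:ℝ) 1, 0 ≤ f r)
    (h1 : IntegrableOn (fun r => f r * r) (Ioc 0 1) volume)
    (hpos : 0 < ∫ r in (0:ℝ)..1, f r * r) : 0 < ∫ r in (0:ℝ)..1, f r * bump r * r := by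
  have hi := (intervalIntegrable_iff_integrableOn_Ioc_of_le zero_le_one).2 h1
  have hcb : Continuous bump := by unfold bump; fun_prop
  have hi2 : IntervalIntegrable (fun r => f r * bump r * r) volume 0 1 := by
    refine (hi.mul_continuousOn hcb.continuousOn).congr fun r _ => ?_
    ring
  have hb : ∀ r ∈ Ioo (0:ℝ) 1, 0 < bump r := fun r hr => by
    have h2 : r ^ 2 < 1 := by nlinarith [hr.1, hr.2]
    exact pow_pos (sub_pos.2 h2) 2
  have e1 : 0 ≤ᵐ[μ01] fun r => f r * bump r * r := by
    filter_upwards [ae_restrict_mem measurableSet_Ioc] with r hr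
    have := h0 r ⟨hr.1.le, hr.2⟩
    have := hr.1
    simp only [Pi.zero_apply, bump]
    positivity
  have hn : 0 ≤ ∫ r in (0:ℝ)..1, f r * bump r * r := by
    rw [integral_of_le zero_le_one]
    exact integral_nonneg_of_ae e1
  refine lt_of_le_of_ne hn fun h => hpos.ne' ?_
  rw [integral_of_le zero_le_one] at h ⊢
  have h3 := (integral_eq_zero_iff_of_nonneg_ae e1
    ((intervalIntegrable_iff_integrableOn_Ioc_of_le zero_le_one).1 hi2)).1 h.symm
  refine integral_eq_zero_of_ae (ae_Ioc_of_ae_Ioo ?_)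
  filter_upwards [(ae_restrict_iff' measurableSet_Ioc).1 h3] with r hr hm
  have h4 := hr ⟨hm.1, hm.2.le⟩
  have h5 := (hb r hm).ne'
  simp only [Pi.zero_apply, mul_eq_zero, h5, or_false] at h4 ⊢
  exact h4

end Final

/-- For small `λ > 0` the radial Dirichlet problem has at least two distinct weak
solutions: a local minimizer of `J_λ` at negative energy and a mountain-pass critical
point at positive energy. -/
theorem stmt11 (f : ℝ → ℝ)
    (hf_nonneg : ∀ r ∈ Icc (0:ℝ) 1, 0 ≤ f r)
    (hf_int : IntegrableOn (fun r => f r * r) (Ioc 0 1) volume)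
    (hf_pos : 0 < ∫ r in (0:ℝ)..1, f r * r) :
    ∃ lamc > (0:ℝ), ∀ lam : ℝ, 0 < lam → lam < lamc →
      ∃ u₁ u₂ : ℝ → ℝ,
        ¬ Set.EqOn u₁ u₂ (Ioc 0 1) ∧
        DirichletWeakSol lam f u₁ ∧ DirichletWeakSol lam f u₂ ∧
        Jfun lam f u₁ < 0 ∧ 0 < Jfun lam f u₂ ∧
        ∃ ε > (0:ℝ), ∀ v : ℝ → ℝ, DirichletAdmissible v →
          (∫ r in (0:ℝ)..1,
              ((deriv (deriv v) r - deriv (deriv u₁) r) ^ 2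
                + (deriv v r - deriv u₁ r) ^ 2 / r ^ 2) * r) < ε →
          Jfun lam f u₁ ≤ Jfun lam f v := by
  set S := sourceL2 f hf_nonneg hf_int with hS
  have hSn : ‖S‖ ≤ ∫ r in (0:ℝ)..1, f r * r := LinearMap.mkContinuous_norm_le _ hf_pos.le _
  refine ⟨1 / (6 * ∫ r in (0:ℝ)..1, f r * r), by positivity, fun lam hl0 hl => ?_⟩
  have hsmall : ‖lam • S‖ < 1 / 6 := by
    rw [norm_smul, Real.norm_eq_abs, abs_of_pos hl0]
    rw [lt_div_iff₀ (by positivity)] at hl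
    have := mul_le_mul_of_nonneg_left hSn hl0.le
    linarith
  have hne : lam • S ≠ 0 := by
    intro h
    have h2 := congrArg (fun T : L2I →L[ℝ] ℝ => T (repL2 admissible_bump)) h
    simp only [smul_apply, hS, sourceL2_repL2, smul_eq_mul,
      zero_apply] at h2
    exact (mul_pos hl0 (source_bump_pos hf_nonneg hf_int hf_pos)).ne' h2
  have hfin : Fact ((2 : ENNReal) ≠ ⊤) := ⟨ENNReal.ofNat_ne_top⟩
  have hsep : TopologicalSpace.SeparableSpace L2I := inferInstance
  obtain ⟨g₁, g₂, hw₁, hw₂, hJ₁, hJ₂, ε, hε, hmin⟩ := exists_two_critical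
    isCompactTrilinear_triL2 ⟨_, triL2_bump_ne_zero⟩ (lam • S) hsmall hne
  have hA₁ := admissible_primL2 (Lp.memLp g₁)
  have hA₂ := admissible_primL2 (Lp.memLp g₂)
  have e₁ : Jfun lam f (primL2 g₁) = absJ triL2 (lam • S) g₁ := by
    rw [Jfun_eq_absJ lam hf_nonneg hf_int hA₁, repL2_primL2]
  have e₂ : Jfun lam f (primL2 g₂) = absJ triL2 (lam • S) g₂ := by
    rw [Jfun_eq_absJ lam hf_nonneg hf_int hA₂, repL2_primL2]
  refine ⟨primL2 g₁, primL2 g₂, fun h => ?_, weakSol_primL2 lam _ _ hw₁, weakSol_primL2 lam _ _ hw₂,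
    e₁ ▸ hJ₁, e₂ ▸ hJ₂, ε, hε, fun v hv hd => ?_⟩
  · have := Jfun_congr (f := f) lam h
    linarith
  · rw [dist_sq_repL2 hA₁ hv, repL2_primL2] at hd
    rw [e₁, Jfun_eq_absJ lam hf_nonneg hf_int hv]
    exact hmin _ hd
end

section
/- Let f ∈ L¹([0,1], r dr) be nonnegative with ∫₀¹ f(r) r dr > 0. There exists λ_c > 0 such that for every 0 < λ < λ_c the radial Navier problem has at least two distinct weak solutions. Precisely, there exist functions u₁ ≠ u₂ on (0,1], each continuously differentiable on (0,1] with locally absolutely continuous first derivative, satisfying: ∫₀¹ (uᵢ'' + uᵢ'/r)² r dr < ∞; uᵢ(1) = 0 and lim_{r→0⁺} uᵢ'(r) = 0; and for every twice continuously differentiable φ : [0,1] → ℝ with φ(1) = 0 and φ'(0) = 0, ∫₀¹ (uᵢ'' + uᵢ'/r)(φ'' + φ'/r) r dr + (1/2)∫₀¹ (uᵢ')²φ' dr = λ∫₀¹ f φ r dr. Moreover u₁ is a local minimizer with I_λ(u₁) < 0 and u₂ is a mountain-pass critical point with I_λ(u₂) > 0. -/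
/-!
Write `g = u'' + u'/r` for the radial Laplacian and `v = √r g ∈ L²(0,1)`. Since `(r u')' = r g` and
`r u'(r) → 0` at the origin, `u'` and `u` are recovered linearly from `v`:
`u'(r) = W v (r) = r⁻¹ ∫₀ʳ √s v(s) ds` and `u(r) = -∫ᵣ¹ W v`. Cauchy–Schwarz gives
`|W v (r)| ≤ ‖v‖` for all `r`. This identifies the admissible class with the Hilbert space `L²(0,1)`
(`exists_represents`, `represents_uOp`) and turns the energy into
`J(v) = ½‖v‖² + ⅙ C(v,v,v) - λ ℓ(v)`, where `C(a,b,c) = ∫₀¹ Wa Wb Wc` is a bounded symmetric trilinear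
form and `ℓ` a bounded functional. Weak convergence in `L²` makes `W vₙ` converge pointwise and
boundedly, so `C` is weakly sequentially continuous by dominated convergence (`cubic`). The test
functions `φ` are themselves admissible, so weak solutions come from critical points of `J`.

For an abstract `J` of this shape (`CubicForm.two_critical_points`):

* For small `λ` the contraction principle gives a critical point `g₁` with `‖g₁‖ ≤ 1/4`. The cubic
  polynomial `J` expands exactly around it as `J(g₁ + h) = J(g₁) + ½ Q(h) + ⅙ C(h,h,h)` with
  `Q(h) = ‖h‖² + C(g₁,h,h) ≥ ¾‖h‖²` (`J_add`, `coercive`). Hence `g₁` is a local minimizer, and the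
  critical point equation tested with `g₁` gives `-1/16 < J(g₁) < 0`.
* The part `½ Q + ⅙ K`, `K(h) = C(h,h,h)`, is a sum of a quadratic and a cubic homogeneous form, so
  its mountain-pass point is a ground state: by weak compactness `K²` attains its maximum over
  `Q ≤ 1` at some `h₀` (`exists_max`), the Euler–Lagrange equation of the scale-invariant quotient
  `K²/Q³` at `h₀` is `C(h₀,h₀,·) = K(h₀) q(h₀,·)`, with `q` the polar form of `Q` (`euler_of_max`),
  and the multiple `h = -(2/K(h₀)) h₀` makes `g₁ + h` critical. Its energy is
  `J(g₁) + 2/(3 K(h₀)²) > 0`, because `K² < 8` on `Q ≤ 1`.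
-/

open MeasureTheory Set Filter

/-- The Navier energy functional `I_λ`. -/
noncomputable def Ifun (lam : ℝ) (f u : ℝ → ℝ) : ℝ :=
  (1 / 2) * (∫ r in (0:ℝ)..1, (deriv (deriv u) r + deriv u r / r) ^ 2 * r)
    + (1 / 6) * (∫ r in (0:ℝ)..1, (deriv u r) ^ 3)
    - lam * ∫ r in (0:ℝ)..1, f r * u r * r

/-- Membership in the radial `W^{2,2}([0,1], r dr)` Navier class: `u` is `C¹` on `(0,1]`
with locally absolutely continuous first derivative, has finite energy
`∫₀¹ (u'' + u'/r)² r dr < ∞`, and satisfies `u(1) = 0` and `u'(r) → 0` as `r → 0⁺`. -/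
def NavierAdmissible (u : ℝ → ℝ) : Prop :=
  (∀ r ∈ Ioc (0:ℝ) 1, DifferentiableAt ℝ u r) ∧
  ContinuousOn (deriv u) (Ioc 0 1) ∧
  (∀ a ∈ Ioc (0:ℝ) 1, ∀ b ∈ Ioc (0:ℝ) 1,
    deriv u b - deriv u a = ∫ r in a..b, deriv (deriv u) r) ∧
  IntervalIntegrable
    (fun r => (deriv (deriv u) r + deriv u r / r) ^ 2 * r) volume 0 1 ∧
  u 1 = 0 ∧
  Tendsto (deriv u) (nhdsWithin 0 (Ioi 0)) (nhds 0)

/-- Weak solution of the radial Navier problem: the equation is tested against all `C²`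
functions `φ` with `φ(1) = 0` and `φ'(0) = 0` (with `φ'(1)` unconstrained, which encodes
the natural boundary condition `u''(1) + u'(1) = 0`). -/
def NavierWeakSol (lam : ℝ) (f u : ℝ → ℝ) : Prop :=
  NavierAdmissible u ∧
  ∀ φ : ℝ → ℝ, ContDiff ℝ 2 φ → φ 1 = 0 → deriv φ 0 = 0 →
    (∫ r in (0:ℝ)..1,
        (deriv (deriv u) r + deriv u r / r) * (deriv (deriv φ) r + deriv φ r / r) * r)
      + (1 / 2) * (∫ r in (0:ℝ)..1, (deriv u r) ^ 2 * deriv φ r)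
      = lam * ∫ r in (0:ℝ)..1, f r * φ r * r

/-! ### Cubic perturbations of a Hilbert norm -/

/-- A symmetric trilinear form of norm at most one on a real inner product space which is sequentially
continuous for weak convergence of bounded sequences. Additivity and homogeneity are recorded in the
first argument only; the symmetries transfer them to the others. -/
structure CubicForm (X : Type*) [NormedAddCommGroup X] [InnerProductSpace ℝ X] where
  C : X → X → X → ℝ
  add' : ∀ a b c d, C (a + b) c d = C a c d + C b c d
  smul' : ∀ (s : ℝ) a c d, C (s • a) c d = s * C a c d
  swap₁₂ : ∀ a b c, C a b c = C b a c
  swap₂₃ : ∀ a b c, C a b c = C a c b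
  bound : ∀ a b c, |C a b c| ≤ ‖a‖ * ‖b‖ * ‖c‖
  weak : ∀ (a b : X) (as bs : ℕ → X) (R : ℝ), (∀ n, ‖as n‖ ≤ R) → (∀ n, ‖bs n‖ ≤ R) →
    (∀ k, Tendsto (fun n => inner ℝ (as n) k) atTop (nhds (inner ℝ a k))) →
    (∀ k, Tendsto (fun n => inner ℝ (bs n) k) atTop (nhds (inner ℝ b k))) →
    Tendsto (fun n => C (as n) (bs n) (bs n)) atTop (nhds (C a b b))

namespace CubicForm

variable {X : Type*} [NormedAddCommGroup X] [InnerProductSpace ℝ X]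

/-- The energy `½‖g‖² + ⅙ C(g,g,g) - λ ℓ(g)`. -/
noncomputable def J (A : CubicForm X) (l : X →L[ℝ] ℝ) (lam : ℝ) (g : X) : ℝ :=
  (1 / 2) * ‖g‖ ^ 2 + (1 / 6) * A.C g g g - lam * l g

/-- The Euler–Lagrange equation of `J` at `g`. -/
def Crit (A : CubicForm X) (l : X →L[ℝ] ℝ) (lam : ℝ) (g : X) : Prop :=
  ∀ k, inner ℝ g k + (1 / 2) * A.C g g k = lam * l k

theorem add₂ (A : CubicForm X) (a b c d : X) : A.C a (b + c) d = A.C a b d + A.C a c d := by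
  rw [A.swap₁₂, A.add', A.swap₁₂ b, A.swap₁₂ c]

theorem add₃ (A : CubicForm X) (a b c d : X) : A.C a b (c + d) = A.C a b c + A.C a b d := by
  rw [A.swap₂₃, A.add₂, A.swap₂₃ _ c, A.swap₂₃ _ d]

theorem smul₂ (A : CubicForm X) (s : ℝ) (a b d : X) : A.C a (s • b) d = s * A.C a b d := by
  rw [A.swap₁₂, A.smul', A.swap₁₂ b]

theorem smul₃ (A : CubicForm X) (s : ℝ) (a b d : X) : A.C a b (s • d) = s * A.C a b d := by
  rw [A.swap₂₃, A.smul₂, A.swap₂₃ _ d]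

theorem sub' (A : CubicForm X) (a b c d : X) : A.C (a - b) c d = A.C a c d - A.C b c d := by
  rw [sub_eq_add_neg, A.add', ← neg_one_smul ℝ b, A.smul']; ring

/-- The form `C(a,b,·)` is represented by a vector, by the Riesz theorem. -/
theorem exists_riesz [CompleteSpace X] (A : CubicForm X) :
    ∃ B : X → X → X, ∀ a b k, inner ℝ (B a b) k = A.C a b k := by
  have h : ∀ a b, ∃ z : X, ∀ k, inner ℝ z k = A.C a b k := by
    intro a b
    let φ : X →L[ℝ] ℝ := LinearMap.mkContinuous
      { toFun := fun k => A.C a b k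
        map_add' := fun x y => A.add₃ a b x y
        map_smul' := fun s x => by simp [A.smul₃] } (‖a‖ * ‖b‖) (fun x => A.bound a b x)
    exact ⟨(InnerProductSpace.toDual ℝ X).symm φ, fun k => by
      rw [InnerProductSpace.toDual_symm_apply]; rfl⟩
  choose B hB using h
  exact ⟨B, hB⟩

/-- The Taylor expansion of the energy at a critical point; it is exact, since `J` is a cubic polynomial. -/
theorem J_add (A : CubicForm X) (l : X →L[ℝ] ℝ) (lam : ℝ) {g : X} (hg : A.Crit l lam g) (h : X) :
    A.J l lam (g + h) = A.J l lam g + (1 / 2) * (‖h‖ ^ 2 + A.C g h h) + (1 / 6) * A.C h h h := by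
  have e := hg h
  have n : ‖g + h‖ ^ 2 = ‖g‖ ^ 2 + 2 * inner ℝ g h + ‖h‖ ^ 2 := norm_add_sq_real g h
  have s1 : A.C h g g = A.C g g h := by rw [A.swap₁₂, A.swap₂₃]
  have s2 : A.C h g h = A.C g h h := A.swap₁₂ _ _ _
  have s3 : A.C g h g = A.C g g h := A.swap₂₃ _ _ _
  have s4 : A.C h h g = A.C g h h := by rw [A.swap₂₃, A.swap₁₂]
  simp only [J, n, map_add, A.add', A.add₂, A.add₃, s1, s2, s3, s4]
  linarith

/-- The critical point equation is the fixed point equation `g = λ z - ½ B(g,g)`, where `z` and `B`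
represent `ℓ` and `C`; the right side contracts the ball of radius `1/4`. -/
theorem exists_small_crit [CompleteSpace X] (A : CubicForm X) (l : X →L[ℝ] ℝ) (lam : ℝ)
    (hl0 : 0 < lam) (hl : lam * ‖l‖ ≤ 1 / 8) :
    ∃ g, ‖g‖ ≤ 1 / 4 ∧ A.Crit l lam g := by
  obtain ⟨B, hB⟩ := A.exists_riesz
  set z := (InnerProductSpace.toDual ℝ X).symm l with hz
  have hzn : ‖z‖ = ‖l‖ := by simp [hz]
  have hBsub : ∀ a b, ‖B a a - B b b‖ ≤ (‖a‖ + ‖b‖) * ‖a - b‖ := by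
    intro a b
    have h1 : ‖B a a - B b b‖ ^ 2 ≤ (‖a‖ + ‖b‖) * ‖a - b‖ * ‖B a a - B b b‖ := by
      set w := B a a - B b b with hw
      have : ‖w‖ ^ 2 = A.C (a - b) (a + b) w := by
        rw [← real_inner_self_eq_norm_sq]
        conv_lhs => rw [hw]
        rw [← hw, inner_sub_left, hB, hB, A.sub', A.add₂, A.add₂, A.swap₁₂ b a w]; ring
      rw [this]
      refine (le_abs_self _).trans ((A.bound _ _ _).trans ?_)
      rw [mul_comm ‖a - b‖]
      gcongr
      exact norm_add_le _ _
    rcases eq_or_lt_of_le (norm_nonneg (B a a - B b b)) with h | h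
    · rw [← h]; positivity
    · nlinarith
  let T : X → X := fun g => lam • z - (1 / 2 : ℝ) • B g g
  let S : Set X := Metric.closedBall 0 (1 / 4)
  have hmaps : MapsTo T S S := by
    intro g hg
    simp only [S, mem_closedBall_zero_iff] at hg ⊢
    have hb := hBsub g 0
    have h00 : B 0 0 = 0 := by
      apply ext_inner_right ℝ
      intro v; rw [hB, inner_zero_left]
      have := A.smul' 0 0 0 v
      simpa using this
    rw [h00] at hb
    simp only [sub_zero, norm_zero, add_zero] at hb
    calc ‖T g‖ ≤ ‖lam • z‖ + ‖(1 / 2 : ℝ) • B g g‖ := norm_sub_le _ _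
      _ = lam * ‖l‖ + 1 / 2 * ‖B g g‖ := by
        rw [norm_smul, norm_smul, hzn, Real.norm_of_nonneg hl0.le]; norm_num
      _ ≤ 1 / 4 := by nlinarith [norm_nonneg g]
  have hc : ContractingWith (1 / 2) (hmaps.restrict T S S) := by
    refine ⟨by
      rw [← NNReal.coe_lt_coe]; norm_num, LipschitzWith.of_dist_le_mul ?_⟩
    rintro ⟨a, ha⟩ ⟨b, hb⟩
    simp only [S, mem_closedBall_zero_iff] at ha hb
    simp only [Subtype.dist_eq, MapsTo.val_restrict_apply, T, dist_eq_norm]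
    have : lam • z - (1 / 2 : ℝ) • B a a - (lam • z - (1 / 2 : ℝ) • B b b)
      = (-(1 / 2 : ℝ)) • (B a a - B b b) := by module
    rw [this, norm_smul]
    have := hBsub a b
    norm_num
    nlinarith [norm_nonneg (a - b)]
  obtain ⟨g, hgS, hg, -⟩ := hc.exists_fixedPoint' (Metric.isClosed_closedBall.isComplete) hmaps
    (x := 0) (by simp [S]) (edist_ne_top _ _)
  refine ⟨g, by simpa [S] using hgS, fun k => ?_⟩
  have h2 : g = lam • z - (1 / 2 : ℝ) • B g g := hg.symm
  have h3 : inner ℝ g k = lam * l k - 1 / 2 * A.C g g k := by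
    conv_lhs => rw [h2]
    rw [inner_sub_left, real_inner_smul_left, real_inner_smul_left, hB, hz,
      InnerProductSpace.toDual_symm_apply]
  linarith

/-- Bounded sequences in a separable Hilbert space have weakly convergent subsequences. -/
theorem exists_weak_lim [CompleteSpace X] [TopologicalSpace.SeparableSpace X] (xs : ℕ → X) (R : ℝ)
    (hR : ∀ n, ‖xs n‖ ≤ R) : ∃ x : X, ∃ φ : ℕ → ℕ, StrictMono φ ∧
      ∀ k, Tendsto (fun n => inner ℝ (xs (φ n)) k) atTop (nhds (inner ℝ x k)) := by
  have h := WeakDual.isSeqCompact_closedBall (𝕜 := ℝ) (E := X) 0 R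
  obtain ⟨a, -, φ, hφ, ht⟩ := h (x := fun n => StrongDual.toWeakDual
    (InnerProductSpace.toDual ℝ X (xs n))) (fun n => by simpa using hR n)
  refine ⟨(InnerProductSpace.toDual ℝ X).symm (WeakDual.toStrongDual a), φ, hφ, fun k => ?_⟩
  have := ((WeakDual.eval_continuous k).tendsto a).comp ht
  rw [InnerProductSpace.toDual_symm_apply]
  exact this

theorem C_smul (A : CubicForm X) (s : ℝ) (h : X) :
    A.C (s • h) (s • h) (s • h) = s ^ 3 * A.C h h h := by
  rw [A.smul', A.smul₂, A.smul₃]; ring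

theorem coercive (A : CubicForm X) {g : X} (hg : ‖g‖ ≤ 1 / 4) (h : X) :
    3 / 4 * ‖h‖ ^ 2 ≤ ‖h‖ ^ 2 + A.C g h h := by
  have h1 := (abs_le.1 (A.bound g h h)).1
  have : ‖g‖ * ‖h‖ * ‖h‖ ≤ 1 / 4 * ‖h‖ * ‖h‖ := by gcongr
  nlinarith

/-- The scale-invariant quotient `C(h,h,h)² / Q(h)³`, with `Q(h) = ‖h‖² + C(g,h,h)`, attains its maximum,
at a point normalized by `Q = 1`. The cubic form passes to weak limits, while `Q` is weakly lower
semicontinuous. -/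
theorem exists_max [CompleteSpace X] [TopologicalSpace.SeparableSpace X] (A : CubicForm X)
    {g : X} (hg : ‖g‖ ≤ 1 / 4) (k₁ : X) (hk₁ : A.C k₁ k₁ k₁ ≠ 0) :
    ∃ h₀, ‖h₀‖ ^ 2 + A.C g h₀ h₀ = 1 ∧ A.C h₀ h₀ h₀ ≠ 0 ∧ A.C h₀ h₀ h₀ ^ 2 < 8 ∧
      ∀ h, A.C h h h ^ 2 ≤ A.C h₀ h₀ h₀ ^ 2 * (‖h‖ ^ 2 + A.C g h h) ^ 3 := by
  set D : Set X := {h | ‖h‖ ^ 2 + A.C g h h ≤ 1} with hD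
  have hDn : ∀ h ∈ D, ‖h‖ ^ 2 ≤ 4 / 3 := by
    intro h hh
    have := A.coercive hg h
    have h2 : ‖h‖ ^ 2 + A.C g h h ≤ 1 := hh
    linarith
  have hDK : ∀ h ∈ D, A.C h h h ^ 2 ≤ 64 / 27 := by
    intro h hh
    calc A.C h h h ^ 2 = |A.C h h h| ^ 2 := (sq_abs _).symm
      _ ≤ (‖h‖ * ‖h‖ * ‖h‖) ^ 2 := by gcongr; exact A.bound h h h
      _ = (‖h‖ ^ 2) ^ 3 := by ring
      _ ≤ (4 / 3) ^ 3 := by gcongr; exact hDn h hh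
      _ = 64 / 27 := by norm_num
  -- The quotient `K² / Q³` is invariant under scaling.
  have hscale : ∀ h, 0 < ‖h‖ ^ 2 + A.C g h h → ∃ h' ∈ D,
      A.C h h h ^ 2 = A.C h' h' h' ^ 2 * (‖h‖ ^ 2 + A.C g h h) ^ 3 := by
    intro h hq
    set q := ‖h‖ ^ 2 + A.C g h h with hqd
    have hs : (√q)⁻¹ ^ 2 = q⁻¹ := by rw [inv_pow, Real.sq_sqrt hq.le]
    refine ⟨(√q)⁻¹ • h, ?_, ?_⟩
    · simp only [hD, mem_ofPred_eq]
      rw [A.smul₂, A.smul₃, norm_smul, mul_pow, Real.norm_eq_abs, sq_abs]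
      have : (√q)⁻¹ ^ 2 * ‖h‖ ^ 2 + (√q)⁻¹ * ((√q)⁻¹ * A.C g h h) = (√q)⁻¹ ^ 2 * q := by
        rw [hqd]; ring
      rw [this, hs, inv_mul_cancel₀ hq.ne']
    · rw [A.C_smul, mul_pow, ← pow_mul, mul_comm 3 2, pow_mul, hs]
      field_simp
  have hS0 : ((fun h => A.C h h h ^ 2) '' D).Nonempty := by
    refine ⟨_, 0, ?_, rfl⟩
    simp only [hD, mem_ofPred_eq]
    have := A.smul₃ 0 g 0 0
    simp at this
    simp [this]
  have hSb : BddAbove ((fun h => A.C h h h ^ 2) '' D) := by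
    refine ⟨64 / 27, ?_⟩
    rintro _ ⟨h, hh, rfl⟩
    exact hDK h hh
  obtain ⟨us, -, hus, husD⟩ := exists_seq_tendsto_sSup hS0 hSb
  set m := sSup ((fun h => A.C h h h ^ 2) '' D) with hm
  have hle : ∀ h ∈ D, A.C h h h ^ 2 ≤ m := fun h hh => le_csSup hSb ⟨h, hh, rfl⟩
  choose xs hxD hxu using husD
  have hR : ∀ n, ‖xs n‖ ≤ 2 := fun n => by
    have := hDn _ (hxD n)
    nlinarith [norm_nonneg (xs n)]
  obtain ⟨h₀, φ, hφ, hw⟩ := exists_weak_lim xs 2 hR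
  have hK : Tendsto (fun n => A.C (xs (φ n)) (xs (φ n)) (xs (φ n)) ^ 2) atTop
      (nhds (A.C h₀ h₀ h₀ ^ 2)) := (A.weak h₀ h₀ _ _ 2 (fun n => hR _) (fun n => hR _) hw hw).pow 2
  have hP : Tendsto (fun n => A.C g (xs (φ n)) (xs (φ n))) atTop (nhds (A.C g h₀ h₀)) :=
    A.weak g h₀ (fun _ => g) _ 2 (fun n => by linarith) (fun n => hR _)
      (fun k => tendsto_const_nhds) hw
  have hK0 : A.C h₀ h₀ h₀ ^ 2 = m := by
    refine tendsto_nhds_unique hK ?_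
    have := hus.comp hφ.tendsto_atTop
    refine this.congr fun n => ?_
    simp [← hxu]
  -- Weak lower semicontinuity of `Q`, from `⟪xₙ, h₀⟫ ≤ ½‖xₙ‖² + ½‖h₀‖²`.
  have hh₀ : h₀ ∈ D := by
    have h1 : ∀ n, inner ℝ (xs (φ n)) h₀ ≤
        (1 / 2) * (1 - A.C g (xs (φ n)) (xs (φ n))) + (1 / 2) * ‖h₀‖ ^ 2 := by
      intro n
      have h2 : ‖xs (φ n)‖ ^ 2 + A.C g (xs (φ n)) (xs (φ n)) ≤ 1 := hxD _
      have h3 := real_inner_le_norm (xs (φ n)) h₀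
      nlinarith [sq_nonneg (‖xs (φ n)‖ - ‖h₀‖)]
    have h4 := le_of_tendsto_of_tendsto' (hw h₀)
      (((tendsto_const_nhds.sub hP).const_mul (1 / 2)).add_const ((1 / 2) * ‖h₀‖ ^ 2)) h1
    rw [real_inner_self_eq_norm_sq] at h4
    simp only [hD, mem_ofPred_eq]
    linarith
  have hq1 : 0 < ‖k₁‖ ^ 2 + A.C g k₁ k₁ := by
    have h1 : k₁ ≠ 0 := by
      rintro rfl
      have := A.smul' 0 0 0 0
      simp at this
      exact hk₁ this
    have := A.coercive hg k₁
    have := norm_pos_iff.2 h1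
    nlinarith
  have hgen : ∀ h, A.C h h h ^ 2 ≤ m * (‖h‖ ^ 2 + A.C g h h) ^ 3 := by
    intro h
    have hc := A.coercive hg h
    rcases eq_or_ne h 0 with rfl | hne
    · have h1 := A.smul' 0 0 0 0
      have h2 := A.smul₃ 0 g 0 0
      simp at h1 h2
      simp [h1, h2]
    · obtain ⟨h', hh', he⟩ := hscale h (by have := norm_pos_iff.2 hne; nlinarith)
      have h5 := hle h' hh'
      have h6 : 0 ≤ ‖h‖ ^ 2 + A.C g h h := by nlinarith
      rw [he]; gcongr
  have hm0 : 0 < m := by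
    have h1 := hgen k₁
    have h2 : 0 < A.C k₁ k₁ k₁ ^ 2 := by positivity
    by_contra hcon
    have : m * (‖k₁‖ ^ 2 + A.C g k₁ k₁) ^ 3 ≤ 0 :=
      mul_nonpos_of_nonpos_of_nonneg (not_lt.1 hcon) (by positivity)
    linarith
  refine ⟨h₀, le_antisymm hh₀ ?_, ?_, ?_, ?_⟩
  · have h1 := hgen h₀
    rw [hK0] at h1
    by_contra hcon
    have h7 : (‖h₀‖ ^ 2 + A.C g h₀ h₀) ^ 3 < 1 :=
      pow_lt_one₀ (by have := A.coercive hg h₀; nlinarith [norm_nonneg h₀])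
        (not_le.1 hcon) (by norm_num)
    nlinarith
  · intro h0
    rw [h0] at hK0
    norm_num at hK0
    linarith
  · have := hDK _ hh₀
    linarith
  · intro h
    rw [hK0]
    exact hgen h

/-- The Euler–Lagrange equation of the maximizer: along each line `s ↦ h₀ + s k` the polynomial
`K(h₀)² Q³ - K²` has a minimum at `s = 0`. -/
theorem euler_of_max (A : CubicForm X) {g h₀ : X} (h1 : ‖h₀‖ ^ 2 + A.C g h₀ h₀ = 1)
    (h2 : A.C h₀ h₀ h₀ ≠ 0)
    (h3 : ∀ h, A.C h h h ^ 2 ≤ A.C h₀ h₀ h₀ ^ 2 * (‖h‖ ^ 2 + A.C g h h) ^ 3) (k : X) :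
    A.C h₀ h₀ k = A.C h₀ h₀ h₀ * (inner ℝ h₀ k + A.C g h₀ k) := by
  set K := A.C h₀ h₀ h₀ with hK
  set K1 := A.C h₀ h₀ k with hK1
  set q1 := inner ℝ h₀ k + A.C g h₀ k with hq1
  set K2 := A.C h₀ k k with hK2
  set K3 := A.C k k k with hK3
  set q2 := ‖k‖ ^ 2 + A.C g k k with hq2
  have hQ : ∀ s : ℝ, ‖h₀ + s • k‖ ^ 2 + A.C g (h₀ + s • k) (h₀ + s • k)
      = 1 + 2 * s * q1 + s ^ 2 * q2 := by
    intro s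
    rw [norm_add_sq_real, norm_smul, mul_pow, Real.norm_eq_abs, sq_abs, real_inner_smul_right]
    simp only [A.add₂, A.add₃, A.smul₂, A.smul₃]
    rw [A.swap₂₃ g k h₀, hq1, hq2, ← h1]; ring
  have hC : ∀ s : ℝ, A.C (h₀ + s • k) (h₀ + s • k) (h₀ + s • k)
      = K + 3 * s * K1 + 3 * s ^ 2 * K2 + s ^ 3 * K3 := by
    intro s
    have s1 : A.C k h₀ h₀ = K1 := by rw [A.swap₁₂, A.swap₂₃]
    have s2 : A.C k h₀ k = K2 := A.swap₁₂ _ _ _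
    have s3 : A.C h₀ k h₀ = K1 := A.swap₂₃ _ _ _
    have s4 : A.C k k h₀ = K2 := by rw [A.swap₂₃, A.swap₁₂]
    simp only [A.add', A.add₂, A.add₃, A.smul', A.smul₂, A.smul₃, s1, s2, s3, s4]
    simp only [← hK, ← hK1, ← hK2, ← hK3]
    ring
  set F : ℝ → ℝ := fun s => K ^ 2 * (1 + 2 * s * q1 + s ^ 2 * q2) ^ 3
    - (K + 3 * s * K1 + 3 * s ^ 2 * K2 + s ^ 3 * K3) ^ 2 with hF
  have hmin : IsLocalMin F 0 := by
    refine Filter.Eventually.of_forall fun s => ?_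
    have := h3 (h₀ + s • k)
    rw [hQ, hC] at this
    simp only [hF]
    norm_num
    linarith
  have hid := hasDerivAt_id (0 : ℝ)
  have hd : HasDerivAt F (6 * K ^ 2 * q1 - 6 * K * K1) 0 := by
    have d1 := ((((hid.const_mul 2).mul_const q1).const_add 1).add ((hid.pow 2).mul_const q2)).pow 3
    have d2 := (((((hid.const_mul 3).mul_const K1).const_add K).add
      (((hid.pow 2).const_mul 3).mul_const K2)).add ((hid.pow 3).mul_const K3)).pow 2
    refine ((d1.const_mul (K ^ 2)).sub d2).congr_deriv ?_
    simp
    ring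
  have h0 := hmin.hasDerivAt_eq_zero hd
  have : 6 * K * (K * q1 - K1) = 0 := by linarith
  rcases mul_eq_zero.1 this with h | h
  · exact absurd (by linarith) h2
  · linarith

/-- Below a threshold of `lam`, the energy has a local minimizer at negative level and a critical point
at positive level. -/
theorem two_critical_points [CompleteSpace X] [TopologicalSpace.SeparableSpace X]
    (A : CubicForm X) (l : X →L[ℝ] ℝ) (k₀ k₁ : X) (hk₀ : l k₀ ≠ 0) (hk₁ : A.C k₁ k₁ k₁ ≠ 0) :
    ∃ lamc > (0 : ℝ), ∀ lam : ℝ, 0 < lam → lam < lamc → ∃ g₁ g₂ : X,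
      A.Crit l lam g₁ ∧ A.Crit l lam g₂ ∧ A.J l lam g₁ < 0 ∧ 0 < A.J l lam g₂ ∧
      ∀ h, ‖h - g₁‖ ^ 2 < 1 → A.J l lam g₁ ≤ A.J l lam h := by
  refine ⟨1 / (8 * (‖l‖ + 1)), by positivity, fun lam h0 h1 => ?_⟩
  have hl : lam * ‖l‖ ≤ 1 / 8 := by
    rw [lt_div_iff₀ (by positivity)] at h1
    nlinarith [norm_nonneg l]
  obtain ⟨g, hg, hcrit⟩ := A.exists_small_crit l lam h0 hl
  have hg0 : g ≠ 0 := by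
    rintro rfl
    have := hcrit k₀
    have h2 := A.smul' 0 0 0 k₀
    simp at h2
    simp [h2, h0.ne', hk₀] at this
  have hgpos : 0 < ‖g‖ := norm_pos_iff.2 hg0
  have hJ : A.J l lam g = -(1 / 2) * ‖g‖ ^ 2 - (1 / 3) * A.C g g g := by
    have := hcrit g
    rw [real_inner_self_eq_norm_sq] at this
    simp only [J]; linarith
  have hCg := abs_le.1 (A.bound g g g)
  have hg3 : ‖g‖ * ‖g‖ * ‖g‖ ≤ 1 / 4 * ‖g‖ ^ 2 := by nlinarith [sq_nonneg ‖g‖]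
  obtain ⟨h₀, hQ, hK, hK8, hmax⟩ := A.exists_max hg k₁ hk₁
  set K := A.C h₀ h₀ h₀ with hKd
  -- On the ray through `h₀` the gradient of `½ Q + ⅙ K` is `τ + ½ τ² K` times that of `½ Q`,
  -- which vanishes at `τ = -2 / K`.
  have heul := A.euler_of_max hQ hK hmax
  refine ⟨g, g + (-2 / K) • h₀, hcrit, ?_, ?_, ?_, ?_⟩
  · intro k
    have e1 := hcrit k
    have e2 := heul k
    rw [inner_add_left, real_inner_smul_left]
    simp only [A.add', A.add₂, A.smul', A.smul₂]
    have hp : -2 / K * K = -2 := div_mul_cancel₀ _ hK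
    rw [A.swap₁₂ h₀ g k, e2, ← hKd]
    linear_combination e1 + (1 / 2) * (-2 / K) * (inner ℝ h₀ k + A.C g h₀ k) * hp
  · rw [hJ]; nlinarith
  · rw [A.J_add l lam hcrit, A.C_smul, A.smul₂, A.smul₃, norm_smul, mul_pow, Real.norm_eq_abs,
      sq_abs, ← hKd]
    have e : (1 / 2) * ((-2 / K) ^ 2 * ‖h₀‖ ^ 2 + -2 / K * (-2 / K * A.C g h₀ h₀))
        + 1 / 6 * ((-2 / K) ^ 3 * K) = 2 / (3 * K ^ 2) := by
      have : (1 / 2) * ((-2 / K) ^ 2 * ‖h₀‖ ^ 2 + -2 / K * (-2 / K * A.C g h₀ h₀))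
        = (1 / 2) * (-2 / K) ^ 2 * (‖h₀‖ ^ 2 + A.C g h₀ h₀) := by ring
      rw [this, hQ]
      field_simp
      ring
    have e3 : 1 / 12 < 2 / (3 * K ^ 2) := by
      have : 0 < K ^ 2 := by positivity
      rw [div_lt_div_iff₀ (by norm_num) (by positivity)]
      linarith
    have : ‖g‖ ^ 2 ≤ 1 / 16 := by nlinarith
    rw [hJ, add_assoc, e]
    nlinarith
  · intro h hh
    obtain ⟨d, rfl⟩ : ∃ d, h = g + d := ⟨h - g, by abel⟩
    rw [add_sub_cancel_left] at hh
    rw [A.J_add l lam hcrit]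
    have c1 := A.coercive hg d
    have c2 := abs_le.1 (A.bound d d d)
    have c3 : ‖d‖ ≤ 1 := by nlinarith [norm_nonneg d]
    have c4 : ‖d‖ * ‖d‖ * ‖d‖ ≤ ‖d‖ ^ 2 := by nlinarith [sq_nonneg ‖d‖]
    nlinarith [sq_nonneg ‖d‖]

end CubicForm

/-! ### The energy space and its trilinear form -/

noncomputable section

/-- Lebesgue measure on `(0,1]`. -/
abbrev unitMeasure : Measure ℝ := volume.restrict (Ioc (0 : ℝ) 1)

/-- The Hilbert space of the functions `v = √r (u'' + u'/r)`. -/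
abbrev EnergySpace : Type := Lp ℝ 2 unitMeasure

theorem memLp_sqrtInd (r : ℝ) :
    MemLp (fun s : ℝ => (Ioc (0 : ℝ) r).indicator (fun s => √s) s) 2 unitMeasure := by
  refine MemLp.of_bound (C := 1)
    ((Real.continuous_sqrt.measurable.indicator measurableSet_Ioc).aestronglyMeasurable) ?_
  refine (ae_restrict_iff' measurableSet_Ioc).2 (.of_forall fun s hs => ?_)
  by_cases h : s ∈ Ioc (0 : ℝ) r
  · rw [indicator_of_mem h, Real.norm_of_nonneg (Real.sqrt_nonneg s)]
    exact Real.sqrt_le_one.2 hs.2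
  · simp [indicator_of_notMem h]

/-- The element `√s · 1_{(0,r]}(s)` of `L²(0,1)`; pairing with it gives `∫₀ʳ √s v(s) ds`. -/
def sqrtInd (r : ℝ) : EnergySpace := (memLp_sqrtInd r).toLp _

/-- The derivative `u'(r) = r⁻¹ ∫₀ʳ √s v(s) ds`, written as an inner product so that it is defined on
classes, and passes to weak limits at each point `r`. -/
def wOp (v : EnergySpace) (r : ℝ) : ℝ := inner ℝ (sqrtInd r) v / r

/-- The function with derivative `wOp v` on `(0,∞)` vanishing at `1`. -/
def uOp (v : EnergySpace) (r : ℝ) : ℝ := -∫ s in r..1, wOp v s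

/-- The derivative `√s v(s)` of `r u'(r)`, extended by zero outside `(0,1]`, so that `uOp v` is defined
and differentiable on both sides of `r = 1`. -/
def density (v : EnergySpace) : ℝ → ℝ := (Ioc (0 : ℝ) 1).indicator fun s => √s * v s

theorem memLp_sqrt : MemLp (fun s : ℝ => √s) 2 unitMeasure := by
  refine MemLp.of_bound (C := 1) Real.continuous_sqrt.aestronglyMeasurable ?_
  refine (ae_restrict_iff' measurableSet_Ioc).2 (.of_forall fun s hs => ?_)
  rw [Real.norm_of_nonneg (Real.sqrt_nonneg s)]
  exact Real.sqrt_le_one.2 hs.2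

theorem integrable_density (v : EnergySpace) : Integrable (density v) := by
  refine (integrable_indicator_iff measurableSet_Ioc).2 ?_
  exact MemLp.integrable_mul memLp_sqrt (Lp.memLp v)

theorem intervalIntegrable_density (v : EnergySpace) (a b : ℝ) :
    IntervalIntegrable (density v) volume a b := (integrable_density v).intervalIntegrable

theorem inner_sqrtInd (v : EnergySpace) {r : ℝ} (hr : 0 ≤ r) :
    inner ℝ (sqrtInd r) v = ∫ s in (0 : ℝ)..r, density v s := by
  rw [L2.inner_def, intervalIntegral.integral_of_le hr, ← integral_indicator measurableSet_Ioc,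
    ← integral_indicator measurableSet_Ioc]
  refine integral_congr_ae ?_
  have h := (ae_restrict_iff' measurableSet_Ioc).1 (memLp_sqrtInd r).coeFn_toLp
  filter_upwards [h] with s hs
  by_cases h1 : s ∈ Ioc (0 : ℝ) 1
  · by_cases h2 : s ∈ Ioc (0 : ℝ) r
    · simp [density, h1, h2, sqrtInd, hs, mul_comm]
    · simp [density, h1, h2, sqrtInd, hs]
  · by_cases h2 : s ∈ Ioc (0 : ℝ) r <;> simp [density, h1, h2]

theorem wOp_eq (v : EnergySpace) {r : ℝ} (hr : 0 < r) :
    wOp v r = (∫ s in (0 : ℝ)..r, density v s) / r := by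
  rw [wOp, inner_sqrtInd v hr.le]

theorem norm_sq_eq (v : EnergySpace) : ‖v‖ ^ 2 = ∫ s in (0 : ℝ)..1, v s ^ 2 := by
  rw [← real_inner_self_eq_norm_sq, L2.inner_def, intervalIntegral.integral_of_le zero_le_one]
  exact integral_congr_ae (.of_forall fun s => by simp [sq])

theorem norm_sqrtInd_le {r : ℝ} (hr : 0 < r) : ‖sqrtInd r‖ ≤ r := by
  refine abs_le_of_sq_le_sq' ?_ hr.le |>.2
  rw [norm_sq_eq, intervalIntegral.integral_of_le zero_le_one]
  have h := (memLp_sqrtInd r).coeFn_toLp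
  have h1 : ∫ s in Ioc (0 : ℝ) 1, (sqrtInd r s) ^ 2
      = ∫ s in Ioc (0 : ℝ) 1, (Ioc (0 : ℝ) r).indicator (fun s => s) s := by
    refine integral_congr_ae ?_
    filter_upwards [h] with s hs
    rw [sqrtInd, hs]
    by_cases h2 : s ∈ Ioc (0 : ℝ) r
    · simp [h2, Real.sq_sqrt h2.1.le]
    · simp [h2]
  rw [h1, setIntegral_indicator measurableSet_Ioc]
  have hsub : Ioc (0 : ℝ) 1 ∩ Ioc 0 r ⊆ Ioc 0 r := inter_subset_right
  have hint : IntegrableOn (fun s : ℝ => s) (Ioc 0 r) :=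
    (continuous_id.integrableOn_Icc (a := 0) (b := r)).mono_set Ioc_subset_Icc_self
  calc ∫ s in Ioc (0 : ℝ) 1 ∩ Ioc 0 r, s ≤ ∫ s in Ioc (0 : ℝ) r, s :=
        setIntegral_mono_set hint ((ae_restrict_iff' measurableSet_Ioc).2
          (.of_forall fun s hs => hs.1.le)) hsub.eventuallyLE
    _ = r ^ 2 / 2 := by
        rw [← intervalIntegral.integral_of_le hr.le, integral_id]; ring
    _ ≤ r ^ 2 := by nlinarith

theorem abs_wOp_le (v : EnergySpace) (r : ℝ) : |wOp v r| ≤ ‖v‖ := by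
  rcases le_or_gt r 0 with hr | hr
  · have : sqrtInd r = 0 := by
      have : (fun s : ℝ => (Ioc (0 : ℝ) r).indicator (fun s => √s) s) = 0 := by
        funext s; simp [Ioc_eq_empty (not_lt.2 hr)]
      simp only [sqrtInd, this]
      rfl
    simp [wOp, this]
  · rw [wOp, abs_div, abs_of_pos hr, div_le_iff₀ hr]
    calc |inner ℝ (sqrtInd r) v| ≤ ‖sqrtInd r‖ * ‖v‖ := abs_real_inner_le_norm _ _
      _ ≤ r * ‖v‖ := by gcongr; exact norm_sqrtInd_le hr
      _ = ‖v‖ * r := mul_comm _ _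

/-- The local form of `abs_wOp_le`, obtained by cutting `v` off outside `(0,r]`; it yields `u'(r) → 0`
at the origin. -/
theorem wOp_sq_le (v : EnergySpace) {r : ℝ} (hr : 0 < r) (hr1 : r ≤ 1) :
    wOp v r ^ 2 ≤ ∫ s in (0 : ℝ)..r, v s ^ 2 := by
  have hm : MemLp ((Ioc (0 : ℝ) r).indicator v) 2 unitMeasure :=
    (Lp.memLp v).indicator measurableSet_Ioc
  set z : EnergySpace := hm.toLp _ with hz
  have hzc := (ae_restrict_iff' measurableSet_Ioc).1 hm.coeFn_toLp
  have h1 : wOp v r = wOp z r := by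
    rw [wOp_eq _ hr, wOp_eq _ hr]
    congr 1
    refine intervalIntegral.integral_congr_ae ?_
    filter_upwards [hzc] with s hs hs1
    rw [uIoc_of_le hr.le] at hs1
    have hs2 : s ∈ Ioc (0 : ℝ) 1 := ⟨hs1.1, hs1.2.trans hr1⟩
    simp [density, hs2, hz, hs hs2, hs1]
  have h2 : ‖z‖ ^ 2 = ∫ s in (0 : ℝ)..r, v s ^ 2 := by
    rw [norm_sq_eq, intervalIntegral.integral_of_le zero_le_one,
      intervalIntegral.integral_of_le hr.le]
    have : ∫ s in Ioc (0 : ℝ) 1, z s ^ 2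
        = ∫ s in Ioc (0 : ℝ) 1, (Ioc (0 : ℝ) r).indicator (fun s => v s ^ 2) s := by
      refine integral_congr_ae ?_
      filter_upwards [hm.coeFn_toLp] with s hs
      rw [hz, hs]
      by_cases h2 : s ∈ Ioc (0 : ℝ) r <;> simp [h2]
    rw [this, setIntegral_indicator measurableSet_Ioc,
      inter_eq_right.2 (Ioc_subset_Ioc_right hr1)]
  rw [h1, ← h2, ← sq_abs]
  gcongr
  exact abs_wOp_le z r

theorem continuous_primitive_density (v : EnergySpace) :
    Continuous fun r => ∫ s in (0 : ℝ)..r, density v s :=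
  intervalIntegral.continuous_primitive (intervalIntegrable_density v) 0

theorem continuousOn_wOp (v : EnergySpace) : ContinuousOn (wOp v) (Ioi 0) := by
  have : ContinuousOn (fun r => (∫ s in (0 : ℝ)..r, density v s) / r) (Ioi 0) :=
    (continuous_primitive_density v).continuousOn.div continuousOn_id fun r hr => ne_of_gt hr
  exact this.congr fun r hr => wOp_eq v hr

theorem aestronglyMeasurable_wOp (v : EnergySpace) :
    AEStronglyMeasurable (wOp v) unitMeasure :=
  ((continuousOn_wOp v).mono fun _ h => h.1).aestronglyMeasurable measurableSet_Ioc

theorem integrable_wOp (v : EnergySpace) : IntegrableOn (wOp v) (Ioc 0 1) :=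
  Integrable.of_bound (aestronglyMeasurable_wOp v) ‖v‖ (.of_forall fun r => abs_wOp_le v r)

theorem intervalIntegrable_wOp (v : EnergySpace) {a b : ℝ} (ha : a ∈ Icc (0 : ℝ) 1)
    (hb : b ∈ Icc (0 : ℝ) 1) : IntervalIntegrable (wOp v) volume a b := by
  refine ((intervalIntegrable_iff_integrableOn_Ioc_of_le zero_le_one).2 (integrable_wOp v)).mono_set
    ?_
  rw [uIcc_of_le zero_le_one]
  exact (convex_Icc (0 : ℝ) 1).ordConnected.uIcc_subset ha hb

theorem wOp_add (a b : EnergySpace) (r : ℝ) : wOp (a + b) r = wOp a r + wOp b r := by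
  simp [wOp, inner_add_right, add_div]

theorem wOp_smul (c : ℝ) (a : EnergySpace) (r : ℝ) : wOp (c • a) r = c * wOp a r := by
  simp [wOp, real_inner_smul_right, mul_div_assoc]

theorem integrable_wOp_mul₃ (a b c : EnergySpace) :
    IntervalIntegrable (fun r => wOp a r * wOp b r * wOp c r) volume 0 1 := by
  refine (intervalIntegrable_iff_integrableOn_Ioc_of_le zero_le_one).2 ?_
  refine Integrable.of_bound (((aestronglyMeasurable_wOp a).mul (aestronglyMeasurable_wOp b)).mul
      (aestronglyMeasurable_wOp c)) (‖a‖ * ‖b‖ * ‖c‖) (.of_forall fun r => ?_)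
  rw [Real.norm_eq_abs, abs_mul, abs_mul]
  gcongr <;> exact abs_wOp_le _ _

/-- The form `C(a,b,c) = ∫₀¹ Wa Wb Wc` with `W = wOp`. -/
def cubic : CubicForm EnergySpace where
  C a b c := ∫ r in (0 : ℝ)..1, wOp a r * wOp b r * wOp c r
  add' a b c d := by
    rw [← intervalIntegral.integral_add (integrable_wOp_mul₃ a c d) (integrable_wOp_mul₃ b c d)]
    congr 1; funext r; rw [wOp_add]; ring
  smul' s a c d := by
    rw [← intervalIntegral.integral_const_mul]
    congr 1; funext r; rw [wOp_smul]; ring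
  swap₁₂ a b c := by congr 1; funext r; ring
  swap₂₃ a b c := by congr 1; funext r; ring
  bound a b c := by
    have := intervalIntegral.norm_integral_le_of_norm_le_const (a := (0 : ℝ)) (b := 1)
      (C := ‖a‖ * ‖b‖ * ‖c‖) (f := fun r => wOp a r * wOp b r * wOp c r) (fun r _ => by
        rw [Real.norm_eq_abs, abs_mul, abs_mul]
        gcongr <;> exact abs_wOp_le _ _)
    simpa using this
  weak a b as bs R ha hb hwa hwb := by
    have hp : ∀ (x : EnergySpace) (xs : ℕ → EnergySpace),
        (∀ k, Tendsto (fun n => inner ℝ (xs n) k) atTop (nhds (inner ℝ x k))) →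
        ∀ r, Tendsto (fun n => wOp (xs n) r) atTop (nhds (wOp x r)) := by
      intro x xs h r
      have := (h (sqrtInd r)).div_const r
      simpa only [wOp, real_inner_comm] using this
    have hR : 0 ≤ R := (norm_nonneg _).trans (ha 0)
    refine intervalIntegral.tendsto_integral_filter_of_dominated_convergence (fun _ => R * R * R)
      (.of_forall fun n => ?_) (.of_forall fun n => .of_forall fun r _ => ?_) (by simp)
      (.of_forall fun r _ => ((hp a as hwa r).mul (hp b bs hwb r)).mul (hp b bs hwb r))
    · rw [uIoc_of_le zero_le_one]
      exact (((aestronglyMeasurable_wOp _).mul (aestronglyMeasurable_wOp _)).mul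
        (aestronglyMeasurable_wOp _))
    · rw [Real.norm_eq_abs, abs_mul, abs_mul]
      gcongr
      · exact (abs_wOp_le _ _).trans (ha n)
      · exact (abs_wOp_le _ _).trans (hb n)
      · exact (abs_wOp_le _ _).trans (hb n)

theorem abs_uOp_le (v : EnergySpace) {r : ℝ} (hr : r ∈ Icc (0 : ℝ) 1) : |uOp v r| ≤ ‖v‖ := by
  rw [uOp, abs_neg]
  have := intervalIntegral.norm_integral_le_of_norm_le_const (a := r) (b := 1)
      (C := ‖v‖) (f := wOp v) (fun r _ => abs_wOp_le v r)
  refine this.trans ?_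
  rw [abs_of_nonneg (by linarith [hr.2])]
  nlinarith [norm_nonneg v, hr.1, hr.2]

theorem uOp_add (a b : EnergySpace) {r : ℝ} (hr : r ∈ Icc (0 : ℝ) 1) :
    uOp (a + b) r = uOp a r + uOp b r := by
  have h1 : (1 : ℝ) ∈ Icc (0 : ℝ) 1 := by simp
  simp only [uOp, wOp_add]
  rw [intervalIntegral.integral_add (intervalIntegrable_wOp a hr h1)
    (intervalIntegrable_wOp b hr h1)]
  ring

theorem uOp_smul (c : ℝ) (a : EnergySpace) (r : ℝ) : uOp (c • a) r = c * uOp a r := by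
  simp only [uOp, wOp_smul, intervalIntegral.integral_const_mul]
  ring

theorem hasDerivAt_uOp (v : EnergySpace) {r : ℝ} (hr : 0 < r) :
    HasDerivAt (uOp v) (wOp v r) r := by
  have hc : ContinuousAt (wOp v) r := (continuousOn_wOp v).continuousAt (Ioi_mem_nhds hr)
  have hi : IntervalIntegrable (wOp v) volume r 1 := by
    refine ((continuousOn_wOp v).mono fun s hs => ?_).intervalIntegrable
    exact lt_of_lt_of_le (lt_min hr one_pos) hs.1
  have hm : StronglyMeasurableAtFilter (wOp v) (nhds r) :=
    (continuousOn_wOp v).stronglyMeasurableAtFilter isOpen_Ioi r hr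
  have h := (intervalIntegral.integral_hasDerivAt_left hi hm hc).fun_neg
  rw [neg_neg] at h
  exact h

theorem integrable_load {f : ℝ → ℝ} (hf : IntegrableOn (fun r => f r * r) (Ioc 0 1) volume)
    (v : EnergySpace) : IntervalIntegrable (fun r => f r * uOp v r * r) volume 0 1 := by
  refine (intervalIntegrable_iff_integrableOn_Ioc_of_le zero_le_one).2 ?_
  have hc : ContinuousOn (uOp v) (Ioc 0 1) := fun r hr =>
    (hasDerivAt_uOp v hr.1).continuousAt.continuousWithinAt
  have := Integrable.mul_bdd (c := ‖v‖) hf (hc.aestronglyMeasurable measurableSet_Ioc)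
    ((ae_restrict_iff' measurableSet_Ioc).2
      (.of_forall fun r hr => abs_uOp_le v (Ioc_subset_Icc_self hr)))
  refine this.congr (.of_forall fun r => ?_)
  simp only
  ring

/-- The load functional `v ↦ ∫₀¹ f u r dr` with `u = uOp v`. -/
def load (f : ℝ → ℝ) (hf : IntegrableOn (fun r => f r * r) (Ioc 0 1) volume) :
    EnergySpace →L[ℝ] ℝ :=
  LinearMap.mkContinuous
    { toFun := fun v => ∫ r in (0 : ℝ)..1, f r * uOp v r * r
      map_add' := fun a b => by
        rw [← intervalIntegral.integral_add (integrable_load hf a) (integrable_load hf b)]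
        refine intervalIntegral.integral_congr fun r hr => ?_
        rw [uIcc_of_le zero_le_one] at hr
        simp only [uOp_add a b hr]
        ring
      map_smul' := fun c a => by
        rw [RingHom.id_apply, smul_eq_mul, ← intervalIntegral.integral_const_mul]
        congr 1; funext r; rw [uOp_smul]; ring }
    (∫ r in (0 : ℝ)..1, |f r * r|) (fun v => by
      have hb : IntervalIntegrable (fun r => |f r * r| * ‖v‖) volume 0 1 :=
        ((intervalIntegrable_iff_integrableOn_Ioc_of_le zero_le_one).2 hf.abs).mul_const _
      rw [← intervalIntegral.integral_mul_const]
      refine intervalIntegral.norm_integral_le_of_norm_le zero_le_one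
        (.of_forall fun r hr => ?_) hb
      have : f r * uOp v r * r = (f r * r) * uOp v r := by ring
      rw [this, Real.norm_eq_abs, abs_mul]
      gcongr
      exact abs_uOp_le v (Ioc_subset_Icc_self hr))

theorem load_apply (f : ℝ → ℝ) (hf : IntegrableOn (fun r => f r * r) (Ioc 0 1) volume)
    (v : EnergySpace) : load f hf v = ∫ r in (0 : ℝ)..1, f r * uOp v r * r := rfl

end

/-! ### Correspondence with the admissible class -/

noncomputable section

/-- The radial Laplacian `u'' + u'/r`. -/
def lap (u : ℝ → ℝ) (r : ℝ) : ℝ := deriv (deriv u) r + deriv u r / r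

/-- The element `v` of `L²(0,1)` corresponds to `u`: it is the class of `√r (u'' + u'/r)`, and `u'` and `u`
are recovered from it on `(0,1]`. -/
structure Represents (v : EnergySpace) (u : ℝ → ℝ) : Prop where
  lap_ae : ∀ᵐ r ∂unitMeasure, v r = √r * lap u r
  wOp_eq : ∀ r ∈ Ioc (0 : ℝ) 1, wOp v r = deriv u r
  uOp_eq : ∀ r ∈ Ioc (0 : ℝ) 1, uOp v r = u r

theorem density_ae {v : EnergySpace} {u : ℝ → ℝ}
    (h : ∀ᵐ r ∂unitMeasure, v r = √r * lap u r) :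
    ∀ᵐ r, r ∈ Ioc (0 : ℝ) 1 → density v r = r * deriv (deriv u) r + deriv u r := by
  filter_upwards [(ae_restrict_iff' measurableSet_Ioc).1 h] with r hr h01
  have h0 : r ≠ 0 := h01.1.ne'
  rw [density, indicator_of_mem h01, hr h01, ← mul_assoc, Real.mul_self_sqrt h01.1.le, lap]
  field_simp

/-- The identity `∫ₐʳ s (u'' + u'/s) ds = r u'(r) - a u'(a)`. The integrability of `u''` on `[a,r]` is
part of the proof: `u''` is the locally integrable `u'' + u'/s` minus a continuous function. -/
theorem integral_density_eq {v : EnergySpace} {u : ℝ → ℝ} (hu : NavierAdmissible u)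
    (h : ∀ᵐ r ∂unitMeasure, v r = √r * lap u r) {a r : ℝ} (ha : 0 < a) (har : a ≤ r)
    (hr : r ≤ 1) : ∫ s in a..r, density v s = r * deriv u r - a * deriv u a := by
  obtain ⟨-, hcont, hftc, -⟩ := hu
  have hsub : ∀ s ∈ uIcc a r, s ∈ Ioc (0 : ℝ) 1 := fun s hs => by
    rw [uIcc_of_le har] at hs
    exact ⟨ha.trans_le hs.1, hs.2.trans hr⟩
  have hsub' : ∀ s ∈ uIoc a r, s ∈ Ioc (0 : ℝ) 1 := fun s hs => hsub s (uIoc_subset_uIcc hs)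
  have hd := density_ae h
  have hint : IntervalIntegrable (deriv (deriv u)) volume a r := by
    have h1 : IntervalIntegrable (fun s => (density v s - deriv u s) * s⁻¹) volume a r := by
      refine ((intervalIntegrable_density v a r).sub ?_).mul_continuousOn ?_
      · exact (hcont.mono hsub).intervalIntegrable
      · exact continuousOn_id.inv₀ fun s hs => (hsub s hs).1.ne'
    refine h1.congr_ae ?_
    refine (ae_restrict_iff' measurableSet_uIoc).2 ?_
    filter_upwards [hd] with s hs hs1
    have := (hsub' s hs1).1.ne'
    rw [hs (hsub' s hs1)]
    field_simp
    ring
  set p : ℝ → ℝ := fun x => deriv u a + ∫ s in a..x, deriv (deriv u) s with hp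
  have hpu : ∀ s ∈ uIcc a r, p s = deriv u s := fun s hs => by
    rw [hp]
    simp only
    rw [← hftc a (hsub a left_mem_uIcc) s (hsub s hs)]
    ring
  have hpac : AbsolutelyContinuousOnInterval p a r := by
    have h1 : AbsolutelyContinuousOnInterval (fun _ : ℝ => deriv u a) a r :=
      (contDiff_const (n := 1)).contDiffOn.absolutelyContinuousOnInterval
    exact h1.fun_add (hint.absolutelyContinuousOnInterval_intervalIntegral left_mem_uIcc)
  have hidac : AbsolutelyContinuousOnInterval (fun x : ℝ => x) a r :=
    (contDiff_id (n := 1)).contDiffOn.absolutelyContinuousOnInterval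
  have key := hidac.integral_deriv_mul_eq_sub hpac
  rw [hpu r right_mem_uIcc, hpu a left_mem_uIcc] at key
  rw [← key]
  refine intervalIntegral.integral_congr_ae ?_
  filter_upwards [hd, hint.ae_hasDerivAt_integral] with s hs hs2 hs1
  have hsI := uIoc_subset_uIcc hs1
  have hpd : HasDerivAt p (deriv (deriv u) s) s :=
    (hs2 hsI a left_mem_uIcc).const_add (deriv u a)
  rw [hs (hsub' s hs1), hpd.deriv, hpu s hsI]
  simp
  ring

/-- The limit `a → 0` in `integral_density_eq` recovers `u'`, because `a u'(a) → 0`. -/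
theorem represents_of_lap_ae {v : EnergySpace} {u : ℝ → ℝ} (hu : NavierAdmissible u)
    (h : ∀ᵐ r ∂unitMeasure, v r = √r * lap u r) : Represents v u := by
  have hw : ∀ r ∈ Ioc (0 : ℝ) 1, wOp v r = deriv u r := by
    intro r hr
    rw [wOp_eq v hr.1, div_eq_iff hr.1.ne']
    have hP := continuous_primitive_density v
    have h1 : Tendsto (fun a => ∫ s in a..r, density v s) (nhdsWithin 0 (Ioi 0))
        (nhds (∫ s in (0 : ℝ)..r, density v s)) := by
      have h2 : ∀ a, ∫ s in a..r, density v s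
          = (∫ s in (0 : ℝ)..r, density v s) - ∫ s in (0 : ℝ)..a, density v s := fun a => by
        rw [intervalIntegral.integral_interval_sub_left] <;> exact intervalIntegrable_density v _ _
      rw [funext h2]
      have h3 : Tendsto (fun a => ∫ s in (0 : ℝ)..a, density v s) (nhdsWithin 0 (Ioi 0))
          (nhds 0) := by
        simpa using (hP.tendsto 0).mono_left nhdsWithin_le_nhds
      simpa using tendsto_const_nhds.sub h3
    have h4 : Tendsto (fun a => r * deriv u r - a * deriv u a) (nhdsWithin 0 (Ioi 0))
        (nhds (r * deriv u r - 0 * 0)) :=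
      tendsto_const_nhds.sub ((tendsto_id.mono_left nhdsWithin_le_nhds).mul hu.2.2.2.2.2)
    have h5 : (fun a => ∫ s in a..r, density v s) =ᶠ[nhdsWithin 0 (Ioi 0)]
        fun a => r * deriv u r - a * deriv u a := by
      filter_upwards [Ioc_mem_nhdsGT hr.1] with a ha
      exact integral_density_eq hu h ha.1 ha.2 hr.2
    have := tendsto_nhds_unique (h1.congr' h5) h4
    linarith
  refine ⟨h, hw, fun r hr => ?_⟩
  obtain ⟨hdiff, hcont, -, -, hu1, -⟩ := hu
  have hsub : ∀ s ∈ uIcc r 1, s ∈ Ioc (0 : ℝ) 1 := fun s hs => by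
    rw [uIcc_of_le hr.2] at hs
    exact ⟨hr.1.trans_le hs.1, hs.2⟩
  have h1 : ∫ s in r..1, deriv u s = u 1 - u r :=
    intervalIntegral.integral_deriv_eq_sub (fun s hs => hdiff s (hsub s hs))
      (hcont.mono hsub).intervalIntegrable
  rw [uOp, intervalIntegral.integral_congr fun s hs => hw s (hsub s hs), h1, hu1]
  ring

theorem measurable_lap (u : ℝ → ℝ) : Measurable (lap u) :=
  (measurable_deriv _).add ((measurable_deriv u).div measurable_id)

theorem exists_represents {u : ℝ → ℝ} (hu : NavierAdmissible u) :
    ∃ v : EnergySpace, Represents v u := by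
  have hm : MemLp (fun r => √r * lap u r) 2 unitMeasure := by
    refine (memLp_two_iff_integrable_sq
      (Real.continuous_sqrt.measurable.mul (measurable_lap u)).aestronglyMeasurable).2 ?_
    have h := (intervalIntegrable_iff_integrableOn_Ioc_of_le zero_le_one).1 hu.2.2.2.1
    refine Integrable.congr h ((ae_restrict_iff' measurableSet_Ioc).2 (.of_forall fun r hr => ?_))
    change lap u r ^ 2 * r = (√r * lap u r) ^ 2
    rw [mul_pow, Real.sq_sqrt hr.1.le, mul_comm]
  exact ⟨hm.toLp _, represents_of_lap_ae hu hm.coeFn_toLp⟩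

theorem deriv_uOp (v : EnergySpace) {r : ℝ} (hr : 0 < r) : deriv (uOp v) r = wOp v r :=
  (hasDerivAt_uOp v hr).deriv

theorem deriv_deriv_uOp (v : EnergySpace) {r : ℝ} (hr : 0 < r) :
    deriv (deriv (uOp v)) r = deriv (fun x => (∫ s in (0 : ℝ)..x, density v s) * x⁻¹) r := by
  refine Filter.EventuallyEq.deriv_eq ?_
  filter_upwards [Ioi_mem_nhds hr] with x hx
  rw [deriv_uOp v hx, wOp_eq v hx, div_eq_mul_inv]

/-- By Lebesgue differentiation, `uOp v` has radial Laplacian `v / √r` almost everywhere. -/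
theorem lap_uOp_ae (v : EnergySpace) : ∀ᵐ r ∂unitMeasure, v r = √r * lap (uOp v) r := by
  refine (ae_restrict_iff' measurableSet_Ioc).2 ?_
  filter_upwards [(intervalIntegrable_density v 0 1).ae_hasDerivAt_integral] with r hr hr1
  have h0 : r ≠ 0 := hr1.1.ne'
  have hI : r ∈ uIcc (0 : ℝ) 1 := by
    rw [uIcc_of_le zero_le_one]; exact Ioc_subset_Icc_self hr1
  have hd := (hr hI 0 left_mem_uIcc).mul (hasDerivAt_inv h0)
  have hd' : HasDerivAt (fun x => (∫ s in (0 : ℝ)..x, density v s) * x⁻¹) _ r := hd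
  rw [lap, deriv_deriv_uOp v hr1.1, hd'.deriv, deriv_uOp v hr1.1, wOp_eq v hr1.1, density,
    indicator_of_mem hr1]
  have hs : √r ≠ 0 := (Real.sqrt_pos.2 hr1.1).ne'
  have hs2 : √r ^ 2 = r := Real.sq_sqrt hr1.1.le
  generalize ∫ s in (0 : ℝ)..r, (Ioc (0 : ℝ) 1).indicator (fun s => √s * v s) s = I
  field_simp
  linear_combination (-(v r) * r) * hs2

theorem admissible_uOp (v : EnergySpace) : NavierAdmissible (uOp v) := by
  refine ⟨fun r hr => (hasDerivAt_uOp v hr.1).differentiableAt, ?_, ?_, ?_, by simp [uOp], ?_⟩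
  · exact ((continuousOn_wOp v).mono fun r hr => hr.1).congr fun r hr => deriv_uOp v hr.1
  · intro a ha b hb
    have hsub : ∀ s ∈ uIcc a b, 0 < s := fun s hs => (lt_min ha.1 hb.1).trans_le hs.1
    have h1 : AbsolutelyContinuousOnInterval (fun x => ∫ s in (0 : ℝ)..x, density v s) a b := by
      refine ((intervalIntegrable_density v 0 1).absolutelyContinuousOnInterval_intervalIntegral
        left_mem_uIcc).mono ?_
      rw [uIcc_of_le zero_le_one]
      exact (convex_Icc (0 : ℝ) 1).ordConnected.uIcc_subset (Ioc_subset_Icc_self ha)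
        (Ioc_subset_Icc_self hb)
    have h2 : AbsolutelyContinuousOnInterval (fun x : ℝ => x⁻¹) a b :=
      ContDiffOn.absolutelyContinuousOnInterval fun s hs =>
        (contDiffAt_inv ℝ (hsub s hs).ne').contDiffWithinAt
    have h3 := (h1.fun_mul h2).integral_deriv_eq_sub
    rw [intervalIntegral.integral_congr fun s hs => deriv_deriv_uOp v (hsub s hs), h3,
      deriv_uOp v ha.1, deriv_uOp v hb.1, wOp_eq v ha.1, wOp_eq v hb.1]
    simp only [div_eq_mul_inv]
  · refine (intervalIntegrable_iff_integrableOn_Ioc_of_le zero_le_one).2 ?_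
    have h : Integrable (fun r => v r ^ 2) unitMeasure := (Lp.memLp v).integrable_sq
    refine h.congr ?_
    filter_upwards [lap_uOp_ae v, ae_restrict_mem measurableSet_Ioc] with r hr hr1
    rw [hr, mul_pow, Real.sq_sqrt hr1.1.le, lap]
    ring
  · have h : IntervalIntegrable (fun r => v r ^ 2) volume 0 1 :=
      (intervalIntegrable_iff_integrableOn_Ioc_of_le zero_le_one).2 (Lp.memLp v).integrable_sq
    have h1 : Tendsto (fun r => √(∫ s in (0 : ℝ)..r, v s ^ 2)) (nhdsWithin 0 (Ioi 0)) (nhds 0) := by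
      have hc : ContinuousOn (fun r => ∫ s in (0 : ℝ)..r, v s ^ 2) (uIcc 0 1) :=
        h.absolutelyContinuousOnInterval_intervalIntegral left_mem_uIcc |>.continuousOn
      have h2 : Tendsto (fun r => ∫ s in (0 : ℝ)..r, v s ^ 2) (nhdsWithin 0 (Ioi 0)) (nhds 0) := by
        have h3 := hc 0 left_mem_uIcc
        have h4 : nhdsWithin (0 : ℝ) (Ioi 0) ≤ nhdsWithin 0 (uIcc 0 1) := by
          rw [uIcc_of_le zero_le_one, nhdsWithin_le_iff]
          exact Icc_mem_nhdsGT one_pos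
        simpa using (h3.tendsto.mono_left h4)
      simpa using h2.sqrt
    refine squeeze_zero_norm' ?_ h1
    filter_upwards [Ioc_mem_nhdsGT one_pos] with r hr
    rw [deriv_uOp v hr.1, Real.norm_eq_abs]
    exact Real.abs_le_sqrt (wOp_sq_le v hr.1 hr.2)

theorem represents_uOp (v : EnergySpace) : Represents v (uOp v) :=
  represents_of_lap_ae (admissible_uOp v) (lap_uOp_ae v)

/-- Test functions are admissible: `φ'(0) = 0` keeps `φ'/r` bounded. -/
theorem admissible_of_contDiff {φ : ℝ → ℝ} (h : ContDiff ℝ 2 φ) (h1 : φ 1 = 0)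
    (h0 : deriv φ 0 = 0) : NavierAdmissible φ := by
  have hd : ContDiff ℝ 1 (deriv φ) := ((contDiff_succ_iff_deriv (n := 1)).1 h).2.2
  have hdd : Continuous (deriv (deriv φ)) := hd.continuous_deriv le_rfl
  refine ⟨fun r _ => (h.differentiable (by norm_num)).differentiableAt,
    hd.continuous.continuousOn, fun a _ b _ => ?_, ?_, h1, ?_⟩
  · exact (intervalIntegral.integral_deriv_eq_sub
      (fun s _ => (hd.differentiable (by norm_num)).differentiableAt)
      (hdd.intervalIntegrable a b)).symm
  · obtain ⟨K, hK⟩ := (isCompact_Icc (a := (0 : ℝ)) (b := 1)).exists_bound_of_continuousOn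
      hdd.continuousOn
    have hq : ∀ r ∈ Ioc (0 : ℝ) 1, |deriv φ r / r| ≤ K := by
      intro r hr
      have := (convex_Icc (0 : ℝ) 1).norm_image_sub_le_of_norm_deriv_le (f := deriv φ)
        (fun s _ => (hd.differentiable (by norm_num)).differentiableAt) hK
        (by simp : (0 : ℝ) ∈ Icc (0 : ℝ) 1) (Ioc_subset_Icc_self hr)
      rw [h0, sub_zero, sub_zero, Real.norm_eq_abs, Real.norm_eq_abs, abs_of_pos hr.1] at this
      rw [abs_div, abs_of_pos hr.1, div_le_iff₀ hr.1]
      exact this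
    refine (intervalIntegrable_iff_integrableOn_Ioc_of_le zero_le_one).2 ?_
    refine Integrable.of_bound (((measurable_lap φ).pow_const 2).mul
      measurable_id).aestronglyMeasurable ((K + K) ^ 2)
      ((ae_restrict_iff' measurableSet_Ioc).2 (.of_forall fun r hr => ?_))
    have e1 := hq r hr
    have e2 : |deriv (deriv φ) r| ≤ K := hK r (Ioc_subset_Icc_self hr)
    have e3 : |lap φ r| ≤ K + K := (abs_add_le _ _).trans (add_le_add e2 e1)
    have e4 : |lap φ r ^ 2 * r| ≤ (K + K) ^ 2 := by
      rw [abs_mul, abs_pow, abs_of_pos hr.1]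
      calc |lap φ r| ^ 2 * r ≤ (K + K) ^ 2 * 1 :=
            mul_le_mul (pow_le_pow_left₀ (abs_nonneg _) e3 2) hr.2 hr.1.le (sq_nonneg _)
        _ = _ := mul_one _
    exact e4
  · have := (hd.continuous.tendsto 0).mono_left (nhdsWithin_le_nhds (s := Ioi 0))
    rwa [h0] at this

/-! ### Energy and Euler–Lagrange equation in terms of the representative -/

namespace Represents

variable {v k : EnergySpace} {u φ : ℝ → ℝ}

theorem inner_eq (h : Represents v u) (hk : Represents k φ) :
    ∫ r in (0 : ℝ)..1, (deriv (deriv u) r + deriv u r / r) * (deriv (deriv φ) r + deriv φ r / r) * r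
      = inner ℝ v k := by
  rw [L2.inner_def, intervalIntegral.integral_of_le zero_le_one]
  refine integral_congr_ae ?_
  filter_upwards [h.lap_ae, hk.lap_ae, ae_restrict_mem measurableSet_Ioc] with r h1 h2 h3
  have hs2 : √r * √r = r := Real.mul_self_sqrt h3.1.le
  rw [h1, h2, RCLike.inner_apply, conj_trivial]
  simp only [lap]
  rw [mul_mul_mul_comm, hs2]
  ring

theorem norm_sub_eq (h : Represents v u) (hk : Represents k φ) :
    ∫ r in (0 : ℝ)..1, ((deriv (deriv u) r + deriv u r / r)
      - (deriv (deriv φ) r + deriv φ r / r)) ^ 2 * r = ‖v - k‖ ^ 2 := by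
  rw [norm_sq_eq, intervalIntegral.integral_of_le zero_le_one,
    intervalIntegral.integral_of_le zero_le_one]
  refine integral_congr_ae ?_
  filter_upwards [h.lap_ae, hk.lap_ae, ae_restrict_mem measurableSet_Ioc, Lp.coeFn_sub v k]
    with r h1 h2 h3 h4
  rw [h4, Pi.sub_apply, h1, h2, ← mul_sub, mul_pow, Real.sq_sqrt h3.1.le]
  simp only [lap]
  ring

theorem cubic_eq (h : Represents v u) (hk : Represents k φ) :
    ∫ r in (0 : ℝ)..1, deriv u r ^ 2 * deriv φ r = cubic.C v v k := by
  simp only [cubic]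
  rw [intervalIntegral.integral_of_le zero_le_one, intervalIntegral.integral_of_le zero_le_one]
  refine setIntegral_congr_fun measurableSet_Ioc fun r hr => ?_
  simp only [h.wOp_eq r hr, hk.wOp_eq r hr]
  ring

theorem load_eq {f : ℝ → ℝ} (hf : IntegrableOn (fun r => f r * r) (Ioc 0 1) volume)
    (h : Represents v u) : ∫ r in (0 : ℝ)..1, f r * u r * r = load f hf v := by
  rw [load_apply, intervalIntegral.integral_of_le zero_le_one,
    intervalIntegral.integral_of_le zero_le_one]
  refine setIntegral_congr_fun measurableSet_Ioc fun r hr => ?_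
  simp only [h.uOp_eq r hr]

theorem Ifun_eq {f : ℝ → ℝ} (hf : IntegrableOn (fun r => f r * r) (Ioc 0 1) volume)
    (h : Represents v u) (lam : ℝ) : Ifun lam f u = cubic.J (load f hf) lam v := by
  have h1 := h.inner_eq h
  have h2 := h.cubic_eq h
  rw [real_inner_self_eq_norm_sq] at h1
  rw [Ifun, CubicForm.J, ← h1, ← h2, ← h.load_eq hf]
  simp only [← sq]
  simp only [pow_succ, pow_zero, one_mul]

theorem weakSol {f : ℝ → ℝ} (hf : IntegrableOn (fun r => f r * r) (Ioc 0 1) volume)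
    {lam : ℝ} (hu : NavierAdmissible u) (h : Represents v u)
    (hv : cubic.Crit (load f hf) lam v) : NavierWeakSol lam f u := by
  refine ⟨hu, fun φ hφ h1 h0 => ?_⟩
  obtain ⟨k, hk⟩ := exists_represents (admissible_of_contDiff hφ h1 h0)
  rw [h.inner_eq hk, h.cubic_eq hk, hk.load_eq hf]
  exact hv k

end Represents

/-- The element representing `r² - 1`, which pairs nontrivially with both the load and the cubic form. -/
theorem exists_test : ∃ k : EnergySpace, (∀ r ∈ Ioc (0 : ℝ) 1, wOp k r = 2 * r) ∧
    ∀ r ∈ Ioc (0 : ℝ) 1, uOp k r = r ^ 2 - 1 := by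
  have hd : deriv (fun r : ℝ => r ^ 2 - 1) = fun r => 2 * r := by
    funext r; simp
  obtain ⟨k, hk⟩ := exists_represents (admissible_of_contDiff (φ := fun r => r ^ 2 - 1)
    (by fun_prop) (by norm_num) (by simp))
  exact ⟨k, fun r hr => by rw [hk.wOp_eq r hr, hd], hk.uOp_eq⟩

theorem cubic_test_ne {k : EnergySpace} (hk : ∀ r ∈ Ioc (0 : ℝ) 1, wOp k r = 2 * r) :
    cubic.C k k k ≠ 0 := by
  have : cubic.C k k k = ∫ r in (0 : ℝ)..1, 8 * r ^ 3 := by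
    simp only [cubic]
    rw [intervalIntegral.integral_of_le zero_le_one, intervalIntegral.integral_of_le zero_le_one]
    refine setIntegral_congr_fun measurableSet_Ioc fun r hr => ?_
    simp only [hk r hr]
    ring
  rw [this, intervalIntegral.integral_const_mul, integral_pow]
  norm_num

theorem load_test_ne {f : ℝ → ℝ} (hf_nonneg : ∀ r ∈ Icc (0:ℝ) 1, 0 ≤ f r)
    (hf : IntegrableOn (fun r => f r * r) (Ioc 0 1) volume)
    (hf_pos : 0 < ∫ r in (0:ℝ)..1, f r * r)
    {k : EnergySpace} (hk : ∀ r ∈ Ioc (0 : ℝ) 1, uOp k r = r ^ 2 - 1) : load f hf k ≠ 0 := by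
  intro h
  have hi : Integrable (fun r => -(f r * uOp k r * r)) unitMeasure :=
    ((intervalIntegrable_iff_integrableOn_Ioc_of_le zero_le_one).1 (integrable_load hf k)).neg
  have hnn : 0 ≤ᵐ[unitMeasure] fun r => -(f r * uOp k r * r) := by
    refine (ae_restrict_iff' measurableSet_Ioc).2 (.of_forall fun r hr => ?_)
    have h1 := hf_nonneg r (Ioc_subset_Icc_self hr)
    have h2 : 0 ≤ 1 - r ^ 2 := by nlinarith [hr.1, hr.2]
    have h3 : -(f r * (r ^ 2 - 1) * r) = f r * (1 - r ^ 2) * r := by ring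
    simp only [Pi.zero_apply, hk r hr, h3]
    exact mul_nonneg (mul_nonneg h1 h2) hr.1.le
  have h0 : ∫ r, -(f r * uOp k r * r) ∂unitMeasure = 0 := by
    rw [integral_neg, ← intervalIntegral.integral_of_le zero_le_one, ← load_apply f hf, h, neg_zero]
  have hae := (integral_eq_zero_iff_of_nonneg_ae hnn hi).1 h0
  have hz : ∫ r in (0:ℝ)..1, f r * r = 0 := by
    rw [intervalIntegral.integral_of_le zero_le_one]
    refine integral_eq_zero_of_ae ?_
    have hne : ∀ᵐ r ∂unitMeasure, r ≠ 1 := ae_restrict_of_ae (by simp [ae_iff])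
    filter_upwards [hae, ae_restrict_mem measurableSet_Ioc, hne] with r h1 h2 h3
    simp only [Pi.zero_apply, hk r h2] at h1 ⊢
    have h4 : r < 1 := lt_of_le_of_ne h2.2 h3
    have h5 : (r ^ 2 - 1) ≠ 0 := by nlinarith [h2.1]
    have h6 : (f r * r) * (r ^ 2 - 1) = 0 := by linarith
    exact (mul_eq_zero.1 h6).resolve_right h5
  linarith

end

/-- For small `λ > 0` the radial Navier problem has at least two distinct weak
solutions: a local minimizer of `I_λ` at negative energy and a mountain-pass critical
point at positive energy. -/
theorem stmt15 (f : ℝ → ℝ)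
    (hf_nonneg : ∀ r ∈ Icc (0:ℝ) 1, 0 ≤ f r)
    (hf_int : IntegrableOn (fun r => f r * r) (Ioc 0 1) volume)
    (hf_pos : 0 < ∫ r in (0:ℝ)..1, f r * r) :
    ∃ lamc > (0:ℝ), ∀ lam : ℝ, 0 < lam → lam < lamc →
      ∃ u₁ u₂ : ℝ → ℝ,
        ¬ Set.EqOn u₁ u₂ (Ioc 0 1) ∧
        NavierWeakSol lam f u₁ ∧ NavierWeakSol lam f u₂ ∧
        Ifun lam f u₁ < 0 ∧ 0 < Ifun lam f u₂ ∧
        ∃ ε > (0:ℝ), ∀ v : ℝ → ℝ, NavierAdmissible v →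
          (∫ r in (0:ℝ)..1,
              ((deriv (deriv v) r + deriv v r / r)
                - (deriv (deriv u₁) r + deriv u₁ r / r)) ^ 2 * r) < ε →
          Ifun lam f u₁ ≤ Ifun lam f v := by
  -- `L²` is separable, which the sequential Banach–Alaoglu theorem requires.
  have : Fact ((2 : ENNReal) ≠ ⊤) := ⟨by simp⟩
  have : TopologicalSpace.SeparableSpace EnergySpace := inferInstance
  obtain ⟨k, hkw, hku⟩ := exists_test
  obtain ⟨lamc, hpos, hmain⟩ := cubic.two_critical_points (load f hf_int) k k
    (load_test_ne hf_nonneg hf_int hf_pos hku) (cubic_test_ne hkw)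
  refine ⟨lamc, hpos, fun lam h0 h1 => ?_⟩
  obtain ⟨g₁, g₂, hc₁, hc₂, hJ₁, hJ₂, hmin⟩ := hmain lam h0 h1
  have r₁ := represents_uOp g₁
  have r₂ := represents_uOp g₂
  refine ⟨uOp g₁, uOp g₂, fun heq => ?_, r₁.weakSol hf_int (admissible_uOp g₁) hc₁,
    r₂.weakSol hf_int (admissible_uOp g₂) hc₂, ?_, ?_, 1, one_pos, fun v hv hlt => ?_⟩
  -- Equal functions on `(0,1]` have equal representatives, hence equal energies.
  · have hw : ∀ r ∈ Ioo (0 : ℝ) 1, wOp g₁ r = wOp g₂ r := by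
      intro r hr
      rw [← deriv_uOp g₁ hr.1, ← deriv_uOp g₂ hr.1]
      refine Filter.EventuallyEq.deriv_eq ?_
      filter_upwards [Ioo_mem_nhds hr.1 hr.2] with x hx
      exact heq (Ioo_subset_Ioc_self hx)
    have hd : ∀ r ∈ Ioo (0 : ℝ) 1, lap (uOp g₁) r = lap (uOp g₂) r := by
      intro r hr
      have h2 : deriv (uOp g₁) =ᶠ[nhds r] deriv (uOp g₂) := by
        filter_upwards [Ioo_mem_nhds hr.1 hr.2] with x hx
        rw [deriv_uOp g₁ hx.1, deriv_uOp g₂ hx.1, hw x hx]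
      rw [lap, lap, h2.deriv_eq, h2.eq_of_nhds]
    have hg : g₁ = g₂ := by
      refine Lp.ext ?_
      have hne : ∀ᵐ r ∂unitMeasure, r ≠ 1 := ae_restrict_of_ae (by simp [ae_iff])
      filter_upwards [r₁.lap_ae, r₂.lap_ae, ae_restrict_mem measurableSet_Ioc, hne]
        with r e1 e2 e3 e4
      rw [e1, e2, hd r ⟨e3.1, lt_of_le_of_ne e3.2 e4⟩]
    rw [hg] at hJ₁
    exact lt_asymm hJ₁ hJ₂
  · rwa [r₁.Ifun_eq hf_int]
  · rwa [r₂.Ifun_eq hf_int]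
  · obtain ⟨h, hh⟩ := exists_represents hv
    rw [r₁.Ifun_eq hf_int, hh.Ifun_eq hf_int]
    exact hmin h (by rwa [← hh.norm_sub_eq r₁])
end
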